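/- arXiv:2205.09686 — 2 statements merged into one kernel-verified Lean document; each statement's English description precedes it below -/
import Mathlib

section
/- For all integers r ≥ 1, s ≥ 1, and n ≥ r+s+2, the number of Dyck paths D ∈ D_n^{r,s} whose only return is at the end (i.e. D has exactly one return, at k = n) equals Σ_{i=0}^{n-2-s-r} (i+1)·M_i·T_{n-4-i, r+s-1}. -/
/-- A Dyck path of semilength `n`, encoded as a word on `Bool`
(`true` = up step `u`, `false` = down step `d`). -/
def IsDyckWord (n : ℕ) (w : List Bool) : Prop :=
  w.length = 2 * n ∧ w.count true = n ∧ w.count false = n ∧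
    ∀ p : List Bool, p <+: w → p.count false ≤ p.count true

/-- The (0-based) indices of the up steps of `w`. -/
def upIdxs (w : List Bool) : List ℕ := w.findIdxs (· == true)

/-- The (0-based) indices of the down steps of `w`. -/
def downIdxs (w : List Bool) : List ℕ := w.findIdxs (· == false)

/-- `rStat w i` is the number of `d`'s strictly between the `i`-th and the
`(i+1)`-st `u` of `w` (with `i` 1-indexed). -/
def rStat (w : List Bool) (i : ℕ) : ℕ :=
  ((w.take ((upIdxs w).getD i 0)).drop ((upIdxs w).getD (i - 1) 0 + 1)).count false

/-- `sStat w i` is the number of `u`'s strictly between the `i`-th and the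
`(i+1)`-st `d` of `w` (with `i` 1-indexed). -/
def sStat (w : List Bool) (i : ℕ) : ℕ :=
  ((w.take ((downIdxs w).getD i 0)).drop ((downIdxs w).getD (i - 1) 0 + 1)).count true

/-- The statistic `L(D) = ∏_{i=1}^{n-1} C(r_i + s_i, r_i)` of a Dyck path of semilength `n`. -/
def LStat (n : ℕ) (w : List Bool) : ℕ :=
  ∏ i ∈ Finset.Icc 1 (n - 1), Nat.choose (rStat w i + sStat w i) (rStat w i)

/-- `dyckL n k` = the set `𝒟ₙᵏ` of Dyck paths of semilength `n` with `L(D) = k`. -/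
def dyckL (n k : ℕ) : Set (List Bool) := {w | IsDyckWord n w ∧ LStat n w = k}

/-- A Motzkin path, encoded as a word on `Option Bool`
(`some true` = up, `some false` = down, `none` = horizontal). -/
def IsMotzkinWord (w : List (Option Bool)) : Prop :=
  w.count (some false) = w.count (some true) ∧
    ∀ p : List (Option Bool), p <+: w → p.count (some false) ≤ p.count (some true)

/-- `motzkin n` = the `n`-th Motzkin number `Mₙ`, the number of Motzkin paths of length `n`. -/
noncomputable def motzkin (n : ℕ) : ℕ :=
  {w : List (Option Bool) | w.length = n ∧ IsMotzkinWord w}.ncard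

/-- The Motzkin ballot number `T_{n,k}`: the number of Motzkin paths of length `n`
whose first down step is in position `k` (1-indexed); by convention `T_{k-1,k} = 1`,
counting the path of `k-1` horizontal steps. -/
noncomputable def motzkinBallot (n k : ℕ) : ℕ :=
  if n + 1 = k then 1
  else
    {w : List (Option Bool) | w.length = n ∧ IsMotzkinWord w ∧
      w.getD (k - 1) none = some false ∧ ∀ j < k - 1, w.getD j none ≠ some false}.ncard

/-- Motzkin numbers with integer index: `Mᵢ = 0` for `i < 0`. -/
noncomputable def motzkinZ (i : ℤ) : ℤ := if 0 ≤ i then (motzkin i.toNat : ℤ) else 0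

/-- Motzkin ballot numbers with integer first index: `T_{n,k} = 0` for `n < 0`. -/
noncomputable def motzkinBallotZ (n : ℤ) (k : ℕ) : ℤ :=
  if 0 ≤ n then (motzkinBallot n.toNat k : ℤ) else 0

/-- The set of returns of a Dyck path `w` of semilength `n`:
indices `1 ≤ k ≤ n` such that the path touches the `x`-axis after `2k` steps. -/
def returns (n : ℕ) (w : List Bool) : Finset ℕ :=
  (Finset.Icc 1 n).filter fun k => (w.take (2 * k)).count false = (w.take (2 * k)).count true

/-- `dyckRS n r s` = the set `𝒟ₙ^{r,s}` of Dyck paths of semilength `n` having exactly one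
index `i` with `rᵢ > 0` and `sᵢ > 0`, and such that at that index `rᵢ = r` and `sᵢ = s`. -/
def dyckRS (n r s : ℕ) : Set (List Bool) :=
  {w | IsDyckWord n w ∧ ∃ i ∈ Finset.Icc 1 (n - 1),
    (0 < rStat w i ∧ 0 < sStat w i) ∧ rStat w i = r ∧ sStat w i = s ∧
      ∀ j ∈ Finset.Icc 1 (n - 1), 0 < rStat w j ∧ 0 < sStat w j → j = i}

/-- `twoStars n w k₁ k₂` says that `k₁ < k₂` are exactly the two indices `i` of `w`
with `rᵢ > 0` and `sᵢ > 0`. -/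
def twoStars (n : ℕ) (w : List Bool) (k₁ k₂ : ℕ) : Prop :=
  k₁ ∈ Finset.Icc 1 (n - 1) ∧ k₂ ∈ Finset.Icc 1 (n - 1) ∧ k₁ < k₂ ∧
    (0 < rStat w k₁ ∧ 0 < sStat w k₁) ∧ (0 < rStat w k₂ ∧ 0 < sStat w k₂) ∧
    ∀ j ∈ Finset.Icc 1 (n - 1), 0 < rStat w j ∧ 0 < sStat w j → j = k₁ ∨ j = k₂

/-- `xStat w k` = the number of indices `i < k` with `rᵢ = 0` and `sᵢ > 0`. -/
def xStat (w : List Bool) (k : ℕ) : ℕ :=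
  ((Finset.Ico 1 k).filter fun i => rStat w i = 0 ∧ 0 < sStat w i).card

/-- `yStat w k` = the number of indices `i < k` with `rᵢ > 0` and `sᵢ = 0`. -/
def yStat (w : List Bool) (k : ℕ) : ℕ :=
  ((Finset.Ico 1 k).filter fun i => 0 < rStat w i ∧ sStat w i = 0).card

/-- The generating function `m(x) = Σ Mₙ xⁿ` of the Motzkin numbers, over `ℚ`. -/
noncomputable def motzkinGF : PowerSeries ℚ := PowerSeries.mk fun n => (motzkin n : ℚ)

/-- The Motzkin numbers, by their first-return recurrence. -/
def motzkinRec : ℕ → ℤ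
  | 0 => 1
  | 1 => 1
  | n + 2 => motzkinRec (n + 1) +
      ∑ i : Fin (n + 1), motzkinRec i * motzkinRec (n - i)

/-- The power series `t = z m(z)`, where `m` is the Motzkin generating function. -/
noncomputable def motzkinT : PowerSeries ℤ := PowerSeries.X * PowerSeries.mk motzkinRec

theorem motzkinT_eq :
    motzkinT = PowerSeries.X * (1 + motzkinT + motzkinT ^ 2) := by
  unfold motzkinT
  congr 1
  have h : (PowerSeries.X * PowerSeries.mk motzkinRec) ^ 2 =
      PowerSeries.X * (PowerSeries.X * (PowerSeries.mk motzkinRec * PowerSeries.mk motzkinRec)) := by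
    ring
  rw [h]
  ext n
  match n with
  | 0 => simp [motzkinRec]
  | 1 => simp [motzkinRec, PowerSeries.coeff_succ_X_mul, PowerSeries.coeff_one]
  | n + 2 =>
    simp only [map_add, PowerSeries.coeff_succ_X_mul, PowerSeries.coeff_mk, PowerSeries.coeff_one]
    rw [PowerSeries.coeff_mul, motzkinRec, Finset.Nat.sum_antidiagonal_eq_sum_range_succ_mk, Finset.sum_range]
    simp

/-- The derivative of `t`, in the form in which it enters the count. -/
theorem sq_X_mul_derivative_motzkinT :
    PowerSeries.X ^ 2 * PowerSeries.derivative ℤ motzkinT * (1 - motzkinT ^ 2) =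
      motzkinT ^ 2 := by
  have h := motzkinT_eq
  have h' := congrArg (PowerSeries.derivative ℤ) h
  simp only [Derivation.leibniz, map_add, smul_eq_mul, pow_two, Derivation.map_one_eq_zero,
    PowerSeries.derivative_X] at h'
  set t := motzkinT
  set t' := PowerSeries.derivative ℤ t
  linear_combination (PowerSeries.X ^ 2 * (1 + t + t ^ 2)) * h' +
    (-(PowerSeries.X ^ 2 * t' * (1 + 2 * t)) - t - PowerSeries.X * (1 + t + t ^ 2)) * h

/-- The number of words of length `l` satisfying `P`. -/
noncomputable def countLen (P : List (Option Bool) → Prop) (l : ℕ) : ℕ :=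
  {w | w.length = l ∧ P w}.ncard

theorem finite_length_and (P : List (Option Bool) → Prop) (l : ℕ) :
    {w : List (Option Bool) | w.length = l ∧ P w}.Finite :=
  (List.finite_length_eq (Option Bool) l).subset fun _ h => h.1

theorem countLen_congr {P Q : List (Option Bool) → Prop} {l : ℕ}
    (h : ∀ w, w.length = l → (P w ↔ Q w)) : countLen P l = countLen Q l := by
  unfold countLen
  congr 1
  ext w
  exact and_congr_right (h w)

theorem countLen_eq_zero {P : List (Option Bool) → Prop} {l : ℕ}
    (h : ∀ w, w.length = l → ¬ P w) : countLen P l = 0 := by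
  unfold countLen
  rw [Set.ncard_eq_zero (finite_length_and P l)]
  ext w
  simpa using h w

theorem countLen_zero (P : List (Option Bool) → Prop) [Decidable (P [])] :
    countLen P 0 = if P [] then 1 else 0 := by
  split_ifs with h
  · unfold countLen
    rw [Set.ncard_eq_one]
    refine ⟨[], ?_⟩
    ext w
    simp only [List.length_eq_zero_iff, Set.mem_ofPred_eq, Set.mem_singleton_iff]
    exact ⟨fun h => h.1, fun e => ⟨e, e ▸ h⟩⟩
  · refine countLen_eq_zero fun w hw => ?_
    rw [List.length_eq_zero_iff] at hw
    exact hw ▸ h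

theorem countLen_succ (P : List (Option Bool) → Prop) (l : ℕ) :
    countLen P (l + 1) = countLen (fun w => P (none :: w)) l +
      countLen (fun w => P (some true :: w)) l + countLen (fun w => P (some false :: w)) l := by
  have key : ∀ c : Option Bool, countLen (fun w => P (c :: w)) l =
      ((c :: ·) '' {w | w.length = l ∧ P (c :: w)}).ncard := fun c =>
    (Set.ncard_image_of_injective _ (List.cons_injective)).symm
  have fin : ∀ c : Option Bool, ((c :: ·) '' {w | w.length = l ∧ P (c :: w)}).Finite :=
    fun c => (finite_length_and _ l).image _
  rw [key, key, key, ← Set.ncard_union_eq ?_ (fin _) (fin _),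
    ← Set.ncard_union_eq ?_ ((fin _).union (fin _)) (fin _)]
  · unfold countLen
    congr 1
    ext w
    constructor
    · rintro ⟨h1, h2⟩
      match w, h1, h2 with
      | none :: w, h1, h2 => exact Or.inl (Or.inl ⟨w, ⟨by simpa using h1, h2⟩, rfl⟩)
      | some true :: w, h1, h2 => exact Or.inl (Or.inr ⟨w, ⟨by simpa using h1, h2⟩, rfl⟩)
      | some false :: w, h1, h2 => exact Or.inr ⟨w, ⟨by simpa using h1, h2⟩, rfl⟩
    · rintro ((⟨w, ⟨h1, h2⟩, rfl⟩ | ⟨w, ⟨h1, h2⟩, rfl⟩) | ⟨w, ⟨h1, h2⟩, rfl⟩) <;>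
        exact ⟨by simpa using h1, h2⟩
  · rw [Set.disjoint_left]
    rintro _ (⟨w, _, rfl⟩ | ⟨w, _, rfl⟩) ⟨w', _, h⟩ <;> simp at h
  · rw [Set.disjoint_left]
    rintro _ ⟨w, _, rfl⟩ ⟨w', _, h⟩
    simp at h

/-- `RevPath e L`: read from right to left, `L` is a Motzkin prefix ending at height `e`. -/
def RevPath (e : ℕ) (L : List (Option Bool)) : Prop :=
  (∀ q, q <:+ L → q.count (some false) ≤ q.count (some true)) ∧
    L.count (some true) = L.count (some false) + e

theorem revPath_nil (e : ℕ) : RevPath e [] ↔ e = 0 := by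
  simp [RevPath, eq_comm]

theorem revPath_none (e : ℕ) (L : List (Option Bool)) :
    RevPath e (none :: L) ↔ RevPath e L := by
  simp only [RevPath, List.suffix_cons_iff, forall_eq_or_imp, List.count_cons]
  simp
  omega

theorem revPath_down (e : ℕ) (L : List (Option Bool)) :
    RevPath e (some false :: L) ↔ RevPath (e + 1) L := by
  simp only [RevPath, List.suffix_cons_iff, forall_eq_or_imp, List.count_cons]
  simp
  grind

theorem revPath_up_succ (e : ℕ) (L : List (Option Bool)) :
    RevPath (e + 1) (some true :: L) ↔ RevPath e L := by
  simp only [RevPath, List.suffix_cons_iff, forall_eq_or_imp, List.count_cons]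
  simp
  grind

theorem not_revPath_zero_up (L : List (Option Bool)) : ¬ RevPath 0 (some true :: L) := by
  rintro ⟨h1, h2⟩
  have := h1 L (List.suffix_cons _ _)
  simp at h2
  omega

theorem countLen_revPath (l e : ℕ) :
    (countLen (RevPath e) l : ℤ) = PowerSeries.coeff (l + 1) (motzkinT ^ (e + 1)) := by
  have hT : ∀ k l, PowerSeries.coeff (l + 1) (motzkinT ^ (k + 1)) =
      PowerSeries.coeff l (motzkinT ^ k) + PowerSeries.coeff l (motzkinT ^ (k + 1)) +
        PowerSeries.coeff l (motzkinT ^ (k + 2)) := by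
    intro k l
    have : motzkinT ^ (k + 1) =
        PowerSeries.X * (motzkinT ^ k + motzkinT ^ (k + 1) + motzkinT ^ (k + 2)) := by
      rw [pow_succ]
      nth_rewrite 2 [motzkinT_eq]
      ring
    nth_rewrite 1 [this]
    simp [PowerSeries.coeff_succ_X_mul]
  have hc : PowerSeries.constantCoeff motzkinT = 0 := by simp [motzkinT]
  induction l generalizing e with
  | zero =>
    classical
    rw [countLen_zero, hT]
    rcases e with _ | e <;> simp [revPath_nil, hc]
  | succ l ih =>
    rw [countLen_succ, hT]
    simp only [revPath_none, revPath_down]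
    push_cast
    rw [ih, ih]
    rcases e with _ | e
    · rw [countLen_eq_zero (P := fun w => RevPath 0 (some true :: w))
        fun w _ => not_revPath_zero_up w]
      simp [PowerSeries.coeff_one]
    · simp only [revPath_up_succ]
      rw [ih]
      ring

/-- The number of letters of `L` before the first up step (all of them if there is none). -/
def lead : List (Option Bool) → ℕ
  | [] => 0
  | some true :: _ => 0
  | none :: L => lead L + 1
  | some false :: L => lead L + 1

/-- The distance between the `m`-th and the `(m+1)`-st `true` of a list, the `0`-th one being
placed right before the list. -/
def gap : List Bool → ℕ → ℕ
  | [], _ => 0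
  | true :: _, 0 => 1
  | false :: l, 0 => gap l 0 + 1
  | true :: l, m + 1 => gap l m
  | false :: l, m + 1 => gap l (m + 1)

theorem gap_append_of_lt (l l' : List Bool) (m : ℕ) (h : m < l.count true) :
    gap (l ++ l') m = gap l m := by
  induction l generalizing m with
  | nil => simp at h
  | cons x l ih =>
    rcases x with _ | _ <;> rcases m with _ | m <;> simp [gap] at h ⊢
    · exact ih 0 (by simpa using h)
    · exact ih _ h
    · exact ih _ h

theorem gap_append_true (l l' : List Bool) (m : ℕ) :
    gap (l ++ true :: l') (l.count true + 1 + m) = gap l' m := by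
  induction l with
  | nil => simp [gap, Nat.add_comm 1 m]
  | cons x l ih =>
    rcases x with _ | _
    · have : List.count true (false :: l) + 1 + m = (l.count true + m) + 1 := by
        simp; omega
      rw [this, List.cons_append, gap, ← ih]
      congr 1
      omega
    · have : List.count true (true :: l) + 1 + m = (l.count true + 1 + m) + 1 := by
        simp; omega
      rw [this, List.cons_append, gap, ih]

theorem gap_append_false_true (l l' : List Bool) :
    gap (l ++ false :: true :: l') (l.count true) = gap (l ++ true :: l') (l.count true) + 1 := by
  induction l with
  | nil => simp [gap]
  | cons x l ih =>
    rcases x with _ | _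
    · simp only [List.cons_append, List.count_cons_of_ne, ne_eq, Bool.false_eq_true,
        not_false_eq_true]
      rcases h : l.count true with _ | m
      · rw [h] at ih
        simp [gap, ih]
      · rw [h] at ih
        simp [gap, ih]
    · simpa [gap] using ih

theorem count_true_map_reverse (c : Option Bool) (L : List (Option Bool)) :
    (L.reverse.map (· == c)).count true = L.count c := by
  rw [List.map_reverse, List.count_reverse, List.count, List.countP_map]
  simp [List.count, Function.comp_def]

theorem gap_reverse_append_true (L : List (Option Bool)) :
    gap ((L.reverse.map (· == some true)) ++ [true]) (L.count (some true)) = lead L + 1 := by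
  have hcount := count_true_map_reverse (some true)
  induction L with
  | nil => simp [gap, lead]
  | cons c L ih =>
    rw [List.reverse_cons, List.map_append, List.append_assoc]
    rw [← hcount L] at ih
    match c with
    | none =>
      rw [List.count_cons_of_ne (by simp), ← hcount L]
      exact (gap_append_false_true _ []).trans (by rw [ih, lead])
    | some false =>
      rw [List.count_cons_of_ne (by simp), ← hcount L]
      exact (gap_append_false_true _ []).trans (by rw [ih, lead])
    | some true =>
      rw [List.count_cons_self, ← hcount L]
      exact (gap_append_true _ [true] 0).trans (by simp [gap, lead])

/-- Reversed Motzkin prefixes whose up-step-free initial run has length `r`. -/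
def LeadPath (r e : ℕ) (L : List (Option Bool)) : Prop := RevPath e L ∧ lead L = r

/-- Reversed Motzkin prefixes with a prescribed gap between consecutive up steps. -/
def GapPath (r e h : ℕ) (L : List (Option Bool)) : Prop :=
  RevPath (e + h) L ∧ gap (L.reverse.map (· == some true)) (L.count (some false) + e) = r

theorem gapPath_none (r e h : ℕ) (L : List (Option Bool)) :
    GapPath r e (h + 1) (none :: L) ↔ GapPath r e (h + 1) L := by
  unfold GapPath
  rw [revPath_none]
  refine and_congr_right fun hL => ?_
  rw [List.reverse_cons, List.map_append, gap_append_of_lt]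
  · simp
  · rw [count_true_map_reverse, List.count_cons_of_ne (by simp), hL.2]
    omega

theorem gapPath_down (r e h : ℕ) (L : List (Option Bool)) :
    GapPath r e (h + 1) (some false :: L) ↔ GapPath r (e + 1) (h + 1) L := by
  unfold GapPath
  rw [revPath_down, show e + (h + 1) + 1 = e + 1 + (h + 1) by omega]
  refine and_congr_right fun hL => ?_
  rw [List.reverse_cons, List.map_append, gap_append_of_lt, List.count_cons_self,
    show L.count (some false) + 1 + e = L.count (some false) + (e + 1) by omega]
  rw [count_true_map_reverse, List.count_cons_self, hL.2]
  omega

theorem gapPath_up_succ (r e h : ℕ) (L : List (Option Bool)) :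
    GapPath r e (h + 2) (some true :: L) ↔ GapPath r e (h + 1) L := by
  unfold GapPath
  rw [← Nat.add_assoc, revPath_up_succ]
  refine and_congr_right fun hL => ?_
  rw [List.reverse_cons, List.map_append, gap_append_of_lt]
  · simp
  · rw [count_true_map_reverse, List.count_cons_of_ne (by simp), hL.2]
    omega

theorem gapPath_up_one (r e : ℕ) (L : List (Option Bool)) :
    GapPath (r + 1) e 1 (some true :: L) ↔ LeadPath r e L := by
  unfold GapPath LeadPath
  rw [revPath_up_succ]
  refine and_congr_right fun hL => ?_
  rw [List.count_cons_of_ne (by simp), ← hL.2, List.reverse_cons, List.map_append]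
  rw [show [some true].map (· == some true) = [true] by rfl, gap_reverse_append_true,
    Nat.add_right_cancel_iff]

theorem constantCoeff_motzkinT : PowerSeries.constantCoeff motzkinT = 0 := by
  simp [motzkinT]

theorem countLen_leadPath (r l e : ℕ) :
    (countLen (LeadPath r e) l : ℤ) =
      PowerSeries.coeff l ((PowerSeries.X * (1 + motzkinT)) ^ r * motzkinT ^ e) := by
  classical
  induction r generalizing l e with
  | zero =>
    rw [pow_zero, one_mul]
    rcases l with _ | l
    · rw [countLen_zero]
      rcases e with _ | e <;> simp [LeadPath, revPath_nil, lead, constantCoeff_motzkinT]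
    · rw [countLen_succ]
      simp only [LeadPath, lead, Nat.add_eq_zero_iff, one_ne_zero, and_false, and_true]
      rw [countLen_eq_zero (P := fun _ => False) (by simp)]
      rcases e with _ | e
      · rw [countLen_eq_zero fun w _ => not_revPath_zero_up w]
        simp [PowerSeries.coeff_one]
      · simp only [revPath_up_succ]
        have := countLen_revPath l e
        unfold countLen at *
        simp [this]
  | succ r ih =>
    have hX : (PowerSeries.X * (1 + motzkinT)) ^ (r + 1) * motzkinT ^ e =
        PowerSeries.X * ((PowerSeries.X * (1 + motzkinT)) ^ r * motzkinT ^ e +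
          (PowerSeries.X * (1 + motzkinT)) ^ r * motzkinT ^ (e + 1)) := by
      ring
    rw [hX]
    rcases l with _ | l
    · rw [countLen_zero]
      simp [LeadPath, lead]
    · rw [PowerSeries.coeff_succ_X_mul, map_add, ← ih, ← ih, countLen_succ]
      simp only [LeadPath, lead, revPath_none, revPath_down, Nat.add_right_cancel_iff]
      rw [countLen_eq_zero (P := fun w => RevPath e (some true :: w) ∧ 0 = r + 1) (by simp)]
      simp only [add_zero, Nat.cast_add]
      rfl

theorem countLen_gapPath (r l e h : ℕ) :
    (countLen (GapPath (r + 1) e (h + 1)) l : ℤ) =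
      PowerSeries.coeff l
        ((PowerSeries.X * (1 + motzkinT)) ^ r * motzkinT ^ (e + (h + 1))) := by
  classical
  have hX : ∀ e h, (PowerSeries.X * (1 + motzkinT)) ^ r * motzkinT ^ (e + (h + 1)) =
      PowerSeries.X * ((PowerSeries.X * (1 + motzkinT)) ^ r * motzkinT ^ (e + (h + 1)) +
        (PowerSeries.X * (1 + motzkinT)) ^ r * motzkinT ^ (e + h) +
        (PowerSeries.X * (1 + motzkinT)) ^ r * motzkinT ^ (e + 1 + (h + 1))) := by
    intro e h
    rw [show e + (h + 1) = e + h + 1 by omega, pow_succ]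
    nth_rewrite 3 [motzkinT_eq]
    ring
  induction l generalizing e h with
  | zero =>
    rw [countLen_zero, hX]
    simp [GapPath, revPath_nil]
  | succ l ih =>
    rw [hX, PowerSeries.coeff_succ_X_mul, countLen_succ]
    simp only [gapPath_none, gapPath_down, map_add]
    push_cast
    rw [ih, ih]
    rcases h with _ | h
    · simp only [zero_add, gapPath_up_one, countLen_leadPath, add_zero]
    · simp only [gapPath_up_succ, ih]

/-- The convolution of the two gap counts, summed over the common height. -/
theorem sum_countLen_gapPath_mul (r s N H : ℕ) (hH : N < H) :
    ∑ x ∈ Finset.HasAntidiagonal.antidiagonal (N + 2), ∑ h ∈ Finset.range H,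
      ((countLen (GapPath (r + 1) 0 (h + 1)) x.1 : ℤ) *
        countLen (GapPath (s + 1) 0 (h + 1)) x.2) =
    ∑ x ∈ Finset.HasAntidiagonal.antidiagonal N,
      ((x.1 : ℤ) + 1) * countLen (RevPath 0) x.1 * countLen (LeadPath (r + s) 0) x.2 := by
  set S := PowerSeries.X * (1 + motzkinT) with hS
  set t := motzkinT with ht
  have hl : ∀ h, PowerSeries.coeff (N + 2) ((S ^ r * t ^ (0 + (h + 1))) *
      (S ^ s * t ^ (0 + (h + 1)))) = ∑ x ∈ Finset.HasAntidiagonal.antidiagonal (N + 2),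
      ((countLen (GapPath (r + 1) 0 (h + 1)) x.1 : ℤ) *
        countLen (GapPath (s + 1) 0 (h + 1)) x.2) := by
    intro h
    rw [PowerSeries.coeff_mul]
    simp only [countLen_gapPath, hS, ht]
  have hr : PowerSeries.coeff N (PowerSeries.derivative ℤ t * (S ^ (r + s) * t ^ 0)) =
      ∑ x ∈ Finset.HasAntidiagonal.antidiagonal N,
      ((x.1 : ℤ) + 1) * countLen (RevPath 0) x.1 * countLen (LeadPath (r + s) 0) x.2 := by
    rw [PowerSeries.coeff_mul]
    simp only [countLen_leadPath, countLen_revPath, PowerSeries.coeff_derivative, hS, ht, zero_add,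
      pow_one]
    exact Finset.sum_congr rfl fun x _ => by ring
  rw [Finset.sum_comm, ← hr]
  simp only [← hl]
  rw [← map_sum,
    ← PowerSeries.coeff_X_pow_mul (PowerSeries.derivative ℤ t * (S ^ (r + s) * t ^ 0)) 2]
  have hunit : IsUnit (1 - t ^ 2) := by
    rw [PowerSeries.isUnit_iff_constantCoeff]
    simp [ht, constantCoeff_motzkinT]
  have hsum : (∑ h ∈ Finset.range H, S ^ r * t ^ (0 + (h + 1)) * (S ^ s * t ^ (0 + (h + 1)))) *
      (1 - t ^ 2) = S ^ (r + s) * t ^ 2 * (1 - t ^ (2 * H)) := by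
    clear hH hl
    induction H with
    | zero => simp
    | succ H ih =>
      rw [Finset.sum_range_succ, add_mul, ih]
      ring
  have hd := sq_X_mul_derivative_motzkinT
  have hX : PowerSeries.X ∣ t := by
    rw [ht, motzkinT]
    exact dvd_mul_right _ _
  obtain ⟨c, hc⟩ := hunit.exists_right_inv
  have hfin : (∑ h ∈ Finset.range H, S ^ r * t ^ (0 + (h + 1)) * (S ^ s * t ^ (0 + (h + 1)))) =
      PowerSeries.X ^ 2 * (PowerSeries.derivative ℤ t * (S ^ (r + s) * t ^ 0)) -
        t ^ (2 * H + 2) * (S ^ (r + s) * c) := by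
    apply hunit.mul_right_cancel
    rw [hsum]
    linear_combination -(S ^ (r + s)) * hd + t ^ (2 * H + 2) * S ^ (r + s) * hc
  rw [hfin, map_sub, sub_eq_self]
  obtain ⟨b, hb⟩ := (pow_dvd_pow_of_dvd hX (2 * H + 2)).mul_right (S ^ (r + s) * c)
  rw [hb, PowerSeries.coeff_X_pow_mul', if_neg (by omega)]

theorem count_map_not (b : Bool) (w : List (Option Bool)) :
    (w.map (Option.map not)).count (some b) = w.count (some !b) := by
  have : (some b) = Option.map not (some !b) := by simp
  rw [this, List.count_map_of_injective]
  exact Option.map_injective Bool.not_injective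

theorem isMotzkinWord_iff_revPath (w : List (Option Bool)) :
    IsMotzkinWord w ↔ RevPath 0 (w.map (Option.map not)) := by
  unfold IsMotzkinWord RevPath
  simp only [count_map_not, Bool.not_true, Bool.not_false, add_zero]
  rw [and_comm]
  refine and_congr_left fun h => ⟨?_, ?_⟩
  · rintro H q ⟨p, hp⟩
    obtain ⟨p', q', rfl, rfl, rfl⟩ := List.map_eq_append_iff.1 hp.symm
    have := H p' (List.prefix_append _ _)
    simp only [count_map_not, List.count_append, Bool.not_true, Bool.not_false] at *
    omega
  · rintro H p ⟨q, rfl⟩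
    have := H (q.map (Option.map not)) (by rw [List.map_append]; exact List.suffix_append _ _)
    simp only [count_map_not, List.count_append, Bool.not_true, Bool.not_false] at *
    omega

theorem countLen_map_not (P : List (Option Bool) → Prop) (l : ℕ) :
    countLen (fun w => P (w.map (Option.map not))) l = countLen P l := by
  have hinv : ∀ w : List (Option Bool), (w.map (Option.map not)).map (Option.map not) = w := by
    intro w
    rw [List.map_map]
    conv_rhs => rw [← List.map_id w]
    congr 1
    funext x
    rcases x with _ | x <;> simp
  unfold countLen
  rw [← Set.ncard_image_of_injective _ (f := List.map (Option.map not))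
    (Function.LeftInverse.injective hinv)]
  congr 1
  ext w
  constructor
  · rintro ⟨v, ⟨h1, h2⟩, rfl⟩
    exact ⟨by simpa using h1, h2⟩
  · rintro ⟨h1, h2⟩
    exact ⟨w.map (Option.map not), ⟨by simpa using h1, by simpa only [hinv] using h2⟩, hinv w⟩

theorem motzkin_eq_countLen (n : ℕ) : motzkin n = countLen (RevPath 0) n := by
  rw [← countLen_map_not]
  unfold motzkin countLen
  simp only [isMotzkinWord_iff_revPath]

theorem lead_le_length (L : List (Option Bool)) : lead L ≤ L.length := by
  induction L with
  | nil => simp [lead]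
  | cons c L ih => rcases c with _ | _ | _ <;> simp [lead, ih]

theorem lead_map_not_eq_iff (w : List (Option Bool)) (k : ℕ) (hk : k < w.length) :
    lead (w.map (Option.map not)) = k ↔
      w.getD k none = some false ∧ ∀ j < k, w.getD j none ≠ some false := by
  induction w generalizing k with
  | nil => simp at hk
  | cons c w ih =>
    have hcons : ∀ (p : ℕ → Prop) (k : ℕ), (∀ j < k + 1, p j) ↔ p 0 ∧ ∀ j < k, p (j + 1) := by
      intro p k
      exact Nat.forall_lt_succ_left
    rcases k with _ | k
    · rcases c with _ | _ | _ <;> simp [lead]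
    · have := ih k (by simpa using hk)
      rw [hcons]
      rcases c with _ | _ | _ <;> simp [lead] at this ⊢ <;> exact this

theorem motzkinBallot_eq_countLen (n k : ℕ) :
    motzkinBallot n (k + 1) = countLen (LeadPath k 0) n := by
  unfold motzkinBallot
  split_ifs with h
  · obtain rfl : n = k := by omega
    have := countLen_leadPath n n 0
    rw [mul_pow, pow_zero, mul_one, PowerSeries.coeff_X_pow_mul', if_pos le_rfl] at this
    simp only [tsub_self, PowerSeries.coeff_zero_eq_constantCoeff_apply, map_pow, map_add, map_one,
      constantCoeff_motzkinT, add_zero, one_pow] at this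
    exact_mod_cast this.symm
  · rw [← countLen_map_not]
    refine countLen_congr (P := fun w => IsMotzkinWord w ∧ w.getD (k + 1 - 1) none = some false ∧
      ∀ j < k + 1 - 1, w.getD j none ≠ some false) fun w hw => ?_
    rw [isMotzkinWord_iff_revPath, LeadPath]
    refine and_congr_right fun _ => ?_
    rcases lt_or_ge k n with hk | hk
    · rw [lead_map_not_eq_iff w k (by omega)]
      rfl
    · have := lead_le_length (w.map (Option.map not))
      rw [List.length_map] at this
      rw [List.getD_eq_default _ _ (by omega)]
      simp
      omega

/-- Pairs of reversed Motzkin prefixes of total length `N` ending at a common positive height,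
with prescribed gaps. -/
def gapPairs (r s N : ℕ) : Set (List (Option Bool) × List (Option Bool)) :=
  {x | x.1.length + x.2.length = N ∧ ∃ h, GapPath r 0 (h + 1) x.1 ∧ GapPath s 0 (h + 1) x.2}

theorem ncard_gapPairs (r s N : ℕ) :
    (gapPairs r s N).ncard = ∑ x ∈ Finset.HasAntidiagonal.antidiagonal N, ∑ h ∈ Finset.range N,
      countLen (GapPath r 0 (h + 1)) x.1 * countLen (GapPath s 0 (h + 1)) x.2 := by
  classical
  have hset : gapPairs r s N =
      ((Finset.HasAntidiagonal.antidiagonal N ×ˢ Finset.range N).biUnion fun y =>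
        (finite_length_and (GapPath r 0 (y.2 + 1)) y.1.1).toFinset ×ˢ
        (finite_length_and (GapPath s 0 (y.2 + 1)) y.1.2).toFinset : Finset _) := by
    ext ⟨L₁, L₂⟩
    simp only [gapPairs, Finset.coe_biUnion, Set.mem_iUnion, Finset.mem_coe, Finset.mem_product,
      Set.Finite.mem_toFinset, Finset.mem_range, Finset.HasAntidiagonal.mem_antidiagonal]
    constructor
    · rintro ⟨h1, h, h2, h3⟩
      refine ⟨((L₁.length, L₂.length), h), ⟨h1, ?_⟩, ⟨rfl, h2⟩, ⟨rfl, h3⟩⟩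
      have := h2.1.2
      have := List.count_le_length (a := some true) (l := L₁)
      simp only at *
      omega
    · rintro ⟨⟨⟨a, b⟩, h⟩, ⟨h1, h2⟩, ⟨h3, h4⟩, ⟨h5, h6⟩⟩
      simp only at h1 h3 h5
      exact ⟨by simp only; omega, h, h4, h6⟩
  rw [hset, Set.ncard_coe_finset, Finset.card_biUnion, Finset.sum_product]
  · refine Finset.sum_congr rfl fun x _ => Finset.sum_congr rfl fun h _ => ?_
    rw [Finset.card_product]
    unfold countLen
    rw [Set.ncard_eq_toFinset_card _ (finite_length_and _ _),
      Set.ncard_eq_toFinset_card _ (finite_length_and _ _)]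
  · rintro ⟨⟨a, b⟩, h⟩ _ ⟨⟨a', b'⟩, h'⟩ _ hne
    rw [Function.onFun, Finset.disjoint_left]
    rintro ⟨L₁, L₂⟩ h1 h2
    simp only [Finset.mem_product, Set.Finite.mem_toFinset] at h1 h2
    obtain ⟨⟨h1, h3⟩, ⟨h4, h5⟩⟩ := h1
    obtain ⟨⟨h6, h7⟩, ⟨h8, h9⟩⟩ := h2
    have e1 := h3.1.2
    have e2 := h7.1.2
    apply hne
    obtain rfl : h = h' := by omega
    rw [← h1, ← h4, ← h6, ← h8]

/-- For each up step of `w`, whether it is followed by a down step; the word is thought of as being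
followed by an up step. -/
def upFlags : List Bool → List Bool
  | [] => []
  | true :: l => (!(l.headD true)) :: upFlags l
  | false :: l => upFlags l

/-- For each down step of `w`, whether it is followed by an up step; the word is thought of as
being followed by an up step. -/
def downFlags : List Bool → List Bool
  | [] => []
  | true :: l => downFlags l
  | false :: l => l.headD true :: downFlags l

theorem length_upFlags (w : List Bool) : (upFlags w).length = w.count true := by
  induction w with
  | nil => rfl
  | cons x l ih => rcases x with _ | _ <;> simp [upFlags, ih]

theorem length_downFlags (w : List Bool) : (downFlags w).length = w.count false := by
  induction w with
  | nil => rfl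
  | cons x l ih => rcases x with _ | _ <;> simp [downFlags, ih]

theorem headD_append_cons_true (p l : List Bool) :
    (p ++ true :: l).headD true = p.headD true := by
  cases p <;> rfl

theorem upFlags_append_cons_true (p l : List Bool) :
    upFlags (p ++ true :: l) = upFlags p ++ upFlags (true :: l) := by
  induction p with
  | nil => rfl
  | cons x p ih =>
    rcases x with _ | _
    · exact ih
    · rw [List.cons_append, upFlags, ih, headD_append_cons_true]
      rfl

theorem downFlags_append_cons_true (p l : List Bool) :
    downFlags (p ++ true :: l) = downFlags p ++ downFlags (true :: l) := by
  induction p with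
  | nil => rfl
  | cons x p ih =>
    rcases x with _ | _
    · simp only [List.cons_append, downFlags, headD_append_cons_true] at ih ⊢
      rw [ih]
    · exact ih

theorem drop_upFlags_append (p q : List Bool) :
    (upFlags (p ++ q)).drop (p.count true) = upFlags q := by
  induction p with
  | nil => rfl
  | cons x p ih => rcases x with _ | _ <;> simpa [upFlags] using ih

theorem drop_downFlags_append (p q : List Bool) :
    (downFlags (p ++ q)).drop (p.count false) = downFlags q := by
  induction p with
  | nil => rfl
  | cons x p ih => rcases x with _ | _ <;> simpa [downFlags] using ih

/-- Up-down and down-up transitions alternate. -/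
theorem count_take_flags_append (p q : List Bool) :
    ((upFlags (p ++ q)).take (p.count true)).count true +
        (if (p ++ q).headD true = true then 0 else 1) =
      ((downFlags (p ++ q)).take (p.count false)).count true +
        (if q.headD true = true then 0 else 1) := by
  induction p with
  | nil => simp
  | cons x p ih =>
    rcases x with _ | _ <;> rcases h : (p ++ q).headD true with _ | _ <;> rw [h] at ih <;>
      simp [upFlags, downFlags, -List.headD_eq_head?_getD, h] at ih ⊢ <;> omega

theorem count_flags (w : List Bool) :
    (upFlags w).count true + (if w.headD true = true then 0 else 1) =
      (downFlags w).count true := by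
  have := count_take_flags_append w []
  rw [List.append_nil, List.take_of_length_le (length_upFlags w).le,
    List.take_of_length_le (length_downFlags w).le] at this
  simpa using this

theorem eq_of_flags_eq {w w' : List Bool} (h : w.headD true = w'.headD true)
    (hu : upFlags w = upFlags w') (hd : downFlags w = downFlags w') : w = w' := by
  induction w generalizing w' with
  | nil =>
    have h1 := length_upFlags w'
    have h2 := length_downFlags w'
    rw [← hu] at h1
    rw [← hd] at h2
    cases w' with
    | nil => rfl
    | cons x l => rcases x with _ | _ <;> simp [upFlags, downFlags] at h1 h2
  | cons x l ih =>
    cases w' with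
    | nil => rcases x with _ | _ <;> simp [upFlags, downFlags] at hu hd
    | cons y l' =>
      obtain rfl : x = y := h
      rcases x with _ | _ <;>
        simp only [upFlags, downFlags, List.cons.injEq] at hu hd
      · rw [ih hd.1 hu hd.2]
      · rw [ih (Bool.not_injective hu.1) hu.2 hd]

/-- The list `l` is empty or ends in `true`. -/
def NoTrail (l : List Bool) : Prop := ∀ l', l ≠ l' ++ [false]

theorem NoTrail.of_append {l l' : List Bool} (h : NoTrail (l ++ l')) : NoTrail l' :=
  fun m hm => h (l ++ m) (by rw [hm, List.append_assoc])

theorem NoTrail.eq_nil_or {l : List Bool} (h : NoTrail l) : l = [] ∨ ∃ m, l = m ++ [true] := by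
  rcases List.eq_nil_or_concat l with rfl | ⟨m, x, rfl⟩
  · exact Or.inl rfl
  · rcases x with _ | _
    · exact absurd (by simp) (h m)
    · exact Or.inr ⟨m, by simp⟩

theorem noTrail_append_true (l : List Bool) : NoTrail (l ++ [true]) := by
  intro l' h
  simpa using congrArg List.getLast? h

theorem noTrail_nil : NoTrail [] := by
  intro l h
  simp at h

theorem noTrail_downFlags (w : List Bool) : NoTrail (downFlags w) := by
  induction w with
  | nil => exact noTrail_nil
  | cons x l ih =>
    rcases x with _ | _
    · rw [downFlags]
      rcases ih.eq_nil_or with h | ⟨m, h⟩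
      · have hl := length_downFlags l
        rw [h] at hl
        rw [h]
        rcases l with _ | ⟨_ | _, l⟩
        · exact noTrail_append_true []
        · simp at hl
        · exact noTrail_append_true []
      · rw [h]
        exact noTrail_append_true (_ :: m)
    · exact ih

theorem noTrail_upFlags_append_false (w : List Bool) : NoTrail (upFlags (w ++ [false])) := by
  induction w with
  | nil => exact noTrail_nil
  | cons x l ih =>
    rcases x with _ | _
    · exact ih
    · rw [List.cons_append, upFlags]
      rcases ih.eq_nil_or with h | ⟨m, h⟩
      · have hl := length_upFlags (l ++ [false])
        rw [h] at hl
        rw [h]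
        rcases l with _ | ⟨_ | _, l⟩
        · exact noTrail_append_true []
        · exact noTrail_append_true []
        · simp at hl
      · rw [h]
        exact noTrail_append_true (_ :: m)

theorem exists_flags_eq (as bs : List Bool) (x : Bool) (ha : NoTrail as) (hb : NoTrail bs)
    (h : as.count true + (if x = true then 0 else 1) = bs.count true) :
    ∃ w, w.headD true = x ∧ upFlags w = as ∧ downFlags w = bs := by
  induction hN : as.length + bs.length generalizing as bs x with
  | zero =>
    have h1 : as = [] := List.length_eq_zero_iff.1 (by omega)
    have h2 : bs = [] := List.length_eq_zero_iff.1 (by omega)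
    subst h1 h2
    refine ⟨[], ?_, rfl, rfl⟩
    rcases x with _ | _ <;> simp at h ⊢
  | succ N ih =>
    rcases x with _ | _
    · rcases bs with _ | ⟨b, bs⟩
      · simp at h
      · obtain ⟨w, h1, h2, h3⟩ := ih as bs b ha (NoTrail.of_append (l := [b]) hb)
          (by rcases b with _ | _ <;> simp at h ⊢ <;> omega) (by simp at hN; omega)
        exact ⟨false :: w, rfl, h2, by rw [downFlags, h1, h3]⟩
    · rcases as with _ | ⟨a, as⟩
      · rcases hb.eq_nil_or with rfl | ⟨m, rfl⟩
        · simp at hN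
        · simp at h
      · obtain ⟨w, h1, h2, h3⟩ := ih as bs (!a) (NoTrail.of_append (l := [a]) ha) hb
          (by rcases a with _ | _ <;> simp at h ⊢ <;> omega) (by simp at hN; omega)
        exact ⟨true :: w, rfl, by rw [upFlags, h1, h2, Bool.not_not], h3⟩

theorem getD_findIdxs_append_cons (b : Bool) (p l : List Bool) :
    ((p ++ b :: l).findIdxs (· == b)).getD (p.count b) 0 = p.length := by
  have hlen : (p.findIdxs (· == b)).length = p.count b := by simp [List.count]
  rw [List.findIdxs_append, List.getD_append_right _ _ _ _ hlen.le, hlen]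
  simp

theorem rStat_append (p q : List Bool) (r : ℕ) :
    rStat (p ++ true :: (List.replicate r false ++ true :: q)) (p.count true + 1) = r := by
  have h1 := getD_findIdxs_append_cons true p (List.replicate r false ++ true :: q)
  have h2 := getD_findIdxs_append_cons true (p ++ true :: List.replicate r false) q
  have hc : (p ++ true :: List.replicate r false).count true = p.count true + 1 := by
    simp [List.count_append, List.count_replicate]
  rw [hc, List.append_assoc, List.cons_append] at h2
  rw [rStat, upIdxs, h2, Nat.add_sub_cancel, h1, ← List.cons_append, ← List.append_assoc,
    List.take_left' rfl, List.append_cons, List.drop_left' (by simp)]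
  simp

theorem sStat_append (p q : List Bool) (s : ℕ) :
    sStat (p ++ false :: (List.replicate s true ++ false :: q)) (p.count false + 1) = s := by
  have h1 := getD_findIdxs_append_cons false p (List.replicate s true ++ false :: q)
  have h2 := getD_findIdxs_append_cons false (p ++ false :: List.replicate s true) q
  have hc : (p ++ false :: List.replicate s true).count false = p.count false + 1 := by
    simp [List.count_append, List.count_replicate]
  rw [hc, List.append_assoc, List.cons_append] at h2
  rw [sStat, downIdxs, h2, Nat.add_sub_cancel, h1, ← List.cons_append, ← List.append_assoc,
    List.take_left' rfl, List.append_cons, List.drop_left' (by simp)]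
  simp

theorem exists_append_cons_of_lt_count (b : Bool) (w : List Bool) (k : ℕ) (h : k < w.count b) :
    ∃ p l, w = p ++ b :: l ∧ p.count b = k := by
  induction w generalizing k with
  | nil => simp at h
  | cons x w ih =>
    by_cases hx : x = b
    · subst hx
      rcases k with _ | k
      · exact ⟨[], w, rfl, rfl⟩
      · obtain ⟨p, l, rfl, h2⟩ := ih k (by simpa using h)
        exact ⟨x :: p, l, rfl, by simp [h2]⟩
    · obtain ⟨p, l, rfl, h2⟩ := ih k (by simpa [hx] using h)
      exact ⟨x :: p, l, rfl, by simp [hx, h2]⟩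

theorem exists_consecutive (b : Bool) (w : List Bool) (k : ℕ) (h : k + 1 < w.count b) :
    ∃ p q m, w = p ++ b :: (List.replicate m (!b) ++ b :: q) ∧ p.count b = k := by
  obtain ⟨p, l, rfl, hp⟩ := exists_append_cons_of_lt_count b w k (by omega)
  obtain ⟨p', q, rfl, hp'⟩ := exists_append_cons_of_lt_count b l 0 (by
    rw [List.count_append, List.count_cons_self] at h; omega)
  refine ⟨p, q, p'.length, ?_, hp⟩
  have : p' = List.replicate p'.length (!b) := by
    rw [List.eq_replicate_iff]
    refine ⟨rfl, fun x hx => ?_⟩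
    rw [List.count_eq_zero] at hp'
    rcases b with _ | _ <;> rcases x with _ | _ <;> simp_all
  rw [← this]

theorem exists_rStat (w : List Bool) (k : ℕ) (h : k + 1 < w.count true) :
    ∃ p q, w = p ++ true :: (List.replicate (rStat w (k + 1)) false ++ true :: q) ∧
      p.count true = k := by
  obtain ⟨p, q, m, hw, rfl⟩ := exists_consecutive true w k h
  have : rStat w (p.count true + 1) = m := by rw [hw]; exact rStat_append p q m
  exact ⟨p, q, by rw [this]; exact hw, rfl⟩

theorem exists_sStat (w : List Bool) (k : ℕ) (h : k + 1 < w.count false) :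
    ∃ p q, w = p ++ false :: (List.replicate (sStat w (k + 1)) true ++ false :: q) ∧
      p.count false = k := by
  obtain ⟨p, q, m, hw, rfl⟩ := exists_consecutive false w k h
  have : sStat w (p.count false + 1) = m := by rw [hw]; exact sStat_append p q m
  exact ⟨p, q, by rw [this]; exact hw, rfl⟩

theorem rStat_pos_iff (w : List Bool) (k : ℕ) (h : k + 1 < w.count true) :
    0 < rStat w (k + 1) ↔ (upFlags w)[k]? = some true := by
  obtain ⟨p, q, hw, hp⟩ := exists_rStat w k h
  generalize rStat w (k + 1) = m at *
  have hd := drop_upFlags_append p (true :: (List.replicate m false ++ true :: q))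
  rw [← hw, hp, upFlags] at hd
  have h0 := congrArg (·[0]?) hd
  simp only [List.getElem?_drop, add_zero] at h0
  rw [h0]
  rcases m with _ | m <;> simp [List.replicate_succ]

theorem sStat_pos_iff (w : List Bool) (k : ℕ) (h : k + 1 < w.count false) :
    0 < sStat w (k + 1) ↔ (downFlags w)[k]? = some true := by
  obtain ⟨p, q, hw, hp⟩ := exists_sStat w k h
  generalize sStat w (k + 1) = m at *
  have hd := drop_downFlags_append p (false :: (List.replicate m true ++ false :: q))
  rw [← hw, hp, downFlags] at hd
  have h0 := congrArg (·[0]?) hd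
  simp only [List.getElem?_drop, add_zero] at h0
  rw [h0]
  rcases m with _ | m <;> simp [List.replicate_succ]

theorem gap_replicate_append (k : ℕ) (l : List Bool) :
    gap (List.replicate k false ++ true :: l) 0 = k + 1 := by
  induction k with
  | zero => simp [gap]
  | succ k ih => simp [List.replicate_succ, gap, ih]

theorem gap_append_replicate (l l' : List Bool) (k : ℕ) (h : NoTrail l) :
    gap (l ++ (List.replicate k false ++ true :: l')) (l.count true) = k + 1 := by
  rcases h.eq_nil_or with rfl | ⟨m, rfl⟩
  · exact gap_replicate_append k l'
  · have := gap_append_true m (List.replicate k false ++ true :: l') 0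
    rw [gap_replicate_append] at this
    simpa using this

theorem downFlags_replicate_append (k : ℕ) (q : List Bool) :
    downFlags (List.replicate (k + 1) false ++ true :: q) =
      List.replicate k false ++ true :: downFlags q := by
  induction k with
  | zero => simp [downFlags]
  | succ k ih =>
    rw [List.replicate_succ, List.cons_append, downFlags, ih, List.replicate_succ]
    rfl

theorem upFlags_replicate_append (k : ℕ) (q : List Bool) :
    upFlags (List.replicate (k + 1) true ++ false :: q) =
      List.replicate k false ++ true :: upFlags q := by
  induction k with
  | zero => simp [upFlags]
  | succ k ih =>
    rw [List.replicate_succ, List.cons_append, upFlags, ih, List.replicate_succ,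
      List.replicate_succ]
    rfl

/-- Balanced words that stay strictly positive between their end points. -/
def StrictPos (n : ℕ) (w : List Bool) : Prop :=
  w.count true = n ∧ w.count false = n ∧
    ∀ p q, w = p ++ q → p ≠ [] → q ≠ [] → p.count false < p.count true

theorem count_true_add_count_false (w : List Bool) :
    w.count true + w.count false = w.length := by
  induction w with
  | nil => rfl
  | cons x l ih => rcases x with _ | _ <;> simp <;> omega

theorem isDyckWord_and_returns_iff (n : ℕ) (hn : 1 ≤ n) (w : List Bool) :
    IsDyckWord n w ∧ returns n w = {n} ↔ StrictPos n w := by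
  constructor
  · rintro ⟨⟨h1, h2, h3, h4⟩, h5⟩
    refine ⟨h2, h3, ?_⟩
    rintro p q rfl hp hq
    refine lt_of_le_of_ne (h4 p (List.prefix_append _ _)) fun he => ?_
    have hpl := count_true_add_count_false p
    have hp0 := List.length_pos_iff.2 hp
    have hq0 := List.length_pos_iff.2 hq
    rw [List.length_append] at h1
    have : p.count true ∈ returns n (p ++ q) := by
      rw [returns, Finset.mem_filter, Finset.mem_Icc, List.take_left' (by omega)]
      exact ⟨by omega, he⟩
    rw [h5, Finset.mem_singleton] at this
    omega
  · rintro ⟨h1, h2, h3⟩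
    have hl := count_true_add_count_false w
    refine ⟨⟨by omega, h1, h2, ?_⟩, ?_⟩
    · rintro p ⟨q, rfl⟩
      by_cases hp : p = []
      · simp [hp]
      by_cases hq : q = []
      · subst hq
        simp only [List.append_nil] at h1 h2
        omega
      · exact (h3 p q rfl hp hq).le
    · ext k
      rw [returns, Finset.mem_filter, Finset.mem_Icc, Finset.mem_singleton]
      constructor
      · rintro ⟨⟨h4, h5⟩, h6⟩
        by_contra hk
        have := h3 (w.take (2 * k)) (w.drop (2 * k)) (List.take_append_drop _ _).symm
          (by rw [← List.length_pos_iff, List.length_take]; omega)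
          (by rw [← List.length_pos_iff, List.length_drop]; omega)
        omega
      · rintro rfl
        rw [List.take_of_length_le (by omega)]
        omega

theorem StrictPos.headD_eq {n : ℕ} {w : List Bool} (h : StrictPos n w) :
    w.headD true = true := by
  obtain ⟨h1, h2, h3⟩ := h
  rcases w with _ | ⟨_ | _, l⟩
  · rfl
  · have hl : l ≠ [] := by
      rintro rfl
      simp at h1 h2
      omega
    have := h3 [false] l rfl (by simp) hl
    simp at this
  · rfl

/-- The two statistics at a common index, in terms of the flags. -/
theorem StrictPos.stats_eq {n : ℕ} {w A A' B B' : List Bool} (h : StrictPos n w)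
    (hu : upFlags w = A ++ true :: (B ++ [true])) (hd : downFlags w = A' ++ true :: (B' ++ [true]))
    (hA : A.length = A'.length) :
    rStat w (A.length + 1) = gap A' (A.count true) ∧
      sStat w (A.length + 1) = gap B.reverse (B'.count true) := by
  have hhead := h.headD_eq
  obtain ⟨h1, h2, h3⟩ := h
  have hlu := length_upFlags w
  have hld := length_downFlags w
  have hnB : A.length + B.length + 2 = n := by
    rw [hu] at hlu; simp at hlu; omega
  constructor
  · have hpos := (rStat_pos_iff w A.length (by omega)).2 (by rw [hu]; simp)
    obtain ⟨p, q, hw, hp⟩ := exists_rStat w A.length (by omega)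
    obtain ⟨r, hr⟩ := Nat.exists_eq_add_of_lt hpos
    rw [zero_add] at hr
    rw [hr] at hw ⊢
    have hstrict := h3 (p ++ true :: List.replicate (r + 1) false) (true :: q)
      (by rw [hw]; simp) (by simp) (by simp)
    have hlen := length_downFlags p
    simp only [List.count_append, List.count_cons_self, List.count_replicate] at hstrict
    simp at hstrict
    have hd' : downFlags w =
        downFlags p ++ (List.replicate r false ++ true :: downFlags q) := by
      rw [hw, downFlags_append_cons_true, downFlags, downFlags_replicate_append]
    have hu' : upFlags p = A := by
      have := congrArg (List.take A.length) hu
      rwa [List.take_left' rfl, hw, upFlags_append_cons_true,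
        List.take_left' (by rw [length_upFlags, hp])] at this
    have hcount := count_flags p
    have hph : p.headD true = true := by
      rw [hw, headD_append_cons_true] at hhead
      exact hhead
    rw [hu', if_pos hph, add_zero] at hcount
    have hA' : A' = downFlags p ++ (List.replicate r false ++ true ::
        (downFlags q).take (A.length - (p.count false + r + 1))) := by
      have h4 := congrArg (List.take A.length) (hd.symm.trans hd')
      rw [List.take_left' hA.symm] at h4
      rw [h4, List.take_append, List.take_of_length_le (by omega), List.take_append,
        List.take_of_length_le (by simp; omega)]
      rw [List.take_cons (by simp; omega)]
      simp
      congr 1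
      omega
    rw [hcount, hA', gap_append_replicate _ _ _ (noTrail_downFlags p)]
  · have hpos := (sStat_pos_iff w A.length (by omega)).2 (by rw [hd, hA]; simp)
    obtain ⟨p, q, hw, hp⟩ := exists_sStat w A.length (by omega)
    obtain ⟨s, hs⟩ := Nat.exists_eq_add_of_lt hpos
    rw [zero_add] at hs
    rw [hs] at hw ⊢
    have hstrict := h3 (p ++ [false]) (List.replicate (s + 1) true ++ false :: q)
      (by rw [hw]; simp) (by simp) (by simp)
    simp [List.count_append] at hstrict
    have hu' : upFlags w =
        upFlags (p ++ [false]) ++ (List.replicate s false ++ true :: upFlags q) := by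
      rw [hw, ← upFlags_replicate_append, List.replicate_succ, List.cons_append,
        ← upFlags_append_cons_true]
      simp
    obtain ⟨a, ha⟩ : ∃ a, upFlags (p ++ [false]) = a ++ [true] := by
      refine (noTrail_upFlags_append_false p).eq_nil_or.resolve_left fun h0 => ?_
      have := length_upFlags (p ++ [false])
      rw [h0] at this
      simp at this
      omega
    have hal : A.length + 1 ≤ a.length := by
      have := congrArg List.length ha
      rw [length_upFlags] at this
      simp at this
      omega
    have hB : B ++ [true] = a.drop (A.length + 1) ++
        (true :: (List.replicate s false ++ true :: upFlags q)) := by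
      have h4 := congrArg (List.drop (A.length + 1)) (hu.symm.trans hu')
      rw [List.append_cons A, List.drop_left' (by simp), ha, List.append_assoc,
        List.drop_append_of_le_length hal] at h4
      exact h4
    have hB' : B' ++ [true] = downFlags (false :: q) := by
      have h4 := drop_downFlags_append (p ++ [false]) (List.replicate (s + 1) true ++ false :: q)
      rw [List.append_assoc, List.singleton_append, ← hw, hd, List.append_cons A',
        List.drop_left' (by simp; omega)] at h4
      rw [h4]
      clear * -
      generalize s + 1 = k
      induction k with
      | zero => rfl
      | succ k ih => simpa [List.replicate_succ, downFlags] using ih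
    have hcount : B'.count true = (upFlags q).count true := by
      have h4 := count_flags (false :: q)
      rw [← hB'] at h4
      simpa [upFlags] using h4.symm
    have hNT : NoTrail (upFlags q) := by
      have h4 := noTrail_append_true B
      rw [hB, ← List.cons_append, ← List.append_assoc, List.append_cons] at h4
      exact h4.of_append
    rw [hcount]
    rcases hNT.eq_nil_or with h0 | ⟨m, h0⟩
    · rw [h0] at hB ⊢
      have : B = a.drop (A.length + 1) ++ (true :: List.replicate s false) := by
        apply List.append_cancel_right (bs := [true])
        rw [hB]
        simp
      rw [this]
      simpa using (gap_replicate_append s (a.drop (A.length + 1)).reverse).symm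
    · rw [h0] at hB ⊢
      have : B = a.drop (A.length + 1) ++ (true :: (List.replicate s false ++ true :: m)) := by
        apply List.append_cancel_right (bs := [true])
        rw [hB]
        simp
      rw [this]
      have h5 := gap_append_true m.reverse
        (List.replicate s false ++ true :: (a.drop (A.length + 1)).reverse) 0
      rw [gap_replicate_append] at h5
      simpa using h5.symm

theorem count_take_mono (l : List Bool) {i j : ℕ} (h : i ≤ j) :
    (l.take i).count true ≤ (l.take j).count true :=
  (List.take_sublist_take_left h).count_le true

/-- Strict positivity in terms of the flags. -/
theorem strictPos_iff {n : ℕ} {w A : List Bool} (hh : w.headD true = true)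
    (h1 : w.count true = n) (h2 : w.count false = n) (hA : upFlags w = A ++ [true]) :
    StrictPos n w ↔ ∀ i, i + 1 < n →
      ((upFlags w).take (i + 1)).count true ≤ ((downFlags w).take i).count true := by
  constructor
  · rintro ⟨-, -, h3⟩ i hi
    obtain ⟨p, l, rfl, hp⟩ := exists_append_cons_of_lt_count true w (i + 1) (by omega)
    have hs := h3 p (true :: l) rfl (by rintro rfl; simp at hp) (by simp)
    have hc := count_take_flags_append p (true :: l)
    rw [hh, hp] at hc
    simp only [if_true, List.headD_cons, add_zero] at hc
    rw [hc]
    exact count_take_mono _ (by omega)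
  · intro hC
    refine ⟨h1, h2, ?_⟩
    rintro p q rfl hp hq
    by_contra! hlt
    have hlen := count_true_add_count_false p
    have hp0 := List.length_pos_iff.2 hp
    have hlenq := count_true_add_count_false q
    have hq0 := List.length_pos_iff.2 hq
    rw [List.count_append] at h1 h2
    have hpos : 1 ≤ p.count false := by omega
    by_cases hy : p.count false < n
    · obtain ⟨p', l, rfl, hp'⟩ :=
        exists_append_cons_of_lt_count false p (p.count false - 1) (by omega)
      generalize hY : (p' ++ false :: l).count false = y at *
      have hc := count_take_flags_append p' (false :: l ++ q)
      rw [← List.append_assoc, hh] at hc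
      rw [if_pos rfl, if_neg (by simp), add_zero] at hc
      rw [List.count_append, List.count_cons_of_ne (by simp)] at hlt
      have hC' := hC (y - 1) (by omega)
      rw [Nat.sub_add_cancel hpos, ← hp'] at hC'
      have := count_take_mono (upFlags (p' ++ false :: l ++ q))
        (show p'.count true ≤ y by omega)
      omega
    · have hc := count_take_flags_append p q
      have hf := count_flags (p ++ q)
      have hl := length_upFlags (p ++ q)
      rw [hh] at hc hf
      simp only [if_true, add_zero] at hc hf
      rw [List.take_of_length_le (l := downFlags _)
        (by rw [length_downFlags, List.count_append]; omega), ← hf] at hc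
      rw [hA, List.length_append, List.length_singleton, List.count_append] at hl
      have : (A ++ [true]).count true = A.count true + 1 := by simp
      rw [hA, this, List.take_append_of_le_length (by omega)] at hc
      have := (List.take_sublist (p.count true) A).count_le true
      omega

/-- The flags of up steps encoded by a pair of words. -/
def pairUp (L M : List (Option Bool)) : List Bool :=
  L.reverse.map (· == some false) ++ true :: (M.map (· == some true) ++ [true])

/-- The flags of down steps encoded by a pair of words. -/
def pairDown (L M : List (Option Bool)) : List Bool :=
  L.reverse.map (· == some true) ++ true :: (M.map (· == some false) ++ [true])

theorem count_true_map (c : Option Bool) (L : List (Option Bool)) :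
    (L.map (· == c)).count true = L.count c := by
  rw [← count_true_map_reverse, List.map_reverse, List.count_reverse]

theorem suffix_le_iff (L : List (Option Bool)) :
    (∀ q, q <:+ L → q.count (some false) ≤ q.count (some true)) ↔
      ∀ m c t, L = m ++ c :: t → (c :: t).count (some false) ≤ t.count (some true) := by
  constructor
  · rintro h m c t rfl
    have h1 := h (c :: t) (List.suffix_append _ _)
    have h2 := h t ⟨m ++ [c], by simp⟩
    rcases c with _ | _ | _ <;> simp_all
  · rintro h q ⟨m, rfl⟩
    rcases q with _ | ⟨c, t⟩
    · simp
    · exact (h m c t rfl).trans (List.count_le_count_cons)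

theorem pair_condition_iff (L M : List (Option Bool))
    (hLM : L.count (some false) + M.count (some true) =
      L.count (some true) + M.count (some false)) :
    (∀ i, i + 1 < L.length + M.length + 2 →
      ((pairUp L M).take (i + 1)).count true ≤ ((pairDown L M).take i).count true) ↔
      ∃ h, RevPath (h + 1) L ∧ RevPath (h + 1) M := by
  have hleft : ∀ m c t, L = m ++ c :: t →
      ((pairUp L M).take (t.length + 1)).count true = (c :: t).count (some false) ∧
      ((pairDown L M).take t.length).count true = t.count (some true) := by
    rintro m c t rfl
    constructor
    · rw [pairUp, List.take_append_of_le_length (by simp), List.reverse_append, List.map_append,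
        List.take_left' (by simp), count_true_map_reverse]
    · rw [pairDown, List.take_append_of_le_length (by simp), List.reverse_append, List.reverse_cons,
        List.append_assoc, List.map_append, List.take_left' (by simp), count_true_map_reverse]
  have hmid : ((pairUp L M).take (L.length + 1)).count true = L.count (some false) + 1 ∧
      ((pairDown L M).take L.length).count true = L.count (some true) := by
    constructor
    · rw [pairUp, List.append_cons, List.take_left' (by simp), List.count_append,
        count_true_map_reverse, List.count_singleton_self]
    · rw [pairDown, List.take_left' (by simp), count_true_map_reverse]
  have hright : ∀ m c t, M = m ++ c :: t →
      ((pairUp L M).take (L.length + 1 + m.length + 1)).count true + t.count (some true) =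
        L.count (some false) + 1 + M.count (some true) ∧
      ((pairDown L M).take (L.length + 1 + m.length)).count true + (c :: t).count (some false) =
        L.count (some true) + 1 + M.count (some false) := by
    rintro m c t rfl
    constructor
    · have : pairUp L (m ++ c :: t) = (L.reverse.map (· == some false) ++ [true] ++
          (m ++ [c]).map (· == some true)) ++ (t.map (· == some true) ++ [true]) := by
        simp [pairUp]
      rw [this, List.take_left' (by simp; omega), List.count_append, List.count_append,
        count_true_map_reverse, count_true_map, List.append_cons m c t, List.count_append (l₂ := t)]
      simp; omega
    · have : pairDown L (m ++ c :: t) = (L.reverse.map (· == some true) ++ [true] ++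
          m.map (· == some false)) ++ ((c :: t).map (· == some false) ++ [true]) := by
        simp [pairDown]
      rw [this, List.take_left' (by simp; omega), List.count_append, List.count_append,
        count_true_map_reverse, count_true_map, List.count_append (l₂ := c :: t)]
      simp; omega
  simp only [RevPath, suffix_le_iff]
  constructor
  · intro hC
    have h0 := hC L.length (by omega)
    rw [hmid.1, hmid.2] at h0
    refine ⟨L.count (some true) - L.count (some false) - 1, ⟨?_, by omega⟩, ?_, by omega⟩
    · intro m c t h
      have h1 := hC t.length (by rw [h]; simp; omega)
      rwa [(hleft m c t h).1, (hleft m c t h).2] at h1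
    · intro m c t h
      have h1 := hC (L.length + 1 + m.length) (by rw [h]; simp; omega)
      have := hright m c t h
      omega
  · rintro ⟨h, ⟨h1, h2⟩, h3, h4⟩ i hi
    rcases lt_trichotomy i L.length with hlt | rfl | hgt
    · have hL : L = L.take (L.length - i - 1) ++ L[L.length - i - 1] ::
          L.drop (L.length - i - 1 + 1) := by
        rw [List.cons_getElem_drop_succ, List.take_append_drop]
      have hlen : (L.drop (L.length - i - 1 + 1)).length = i := by
        rw [List.length_drop]; omega
      have := hleft _ _ _ hL
      rw [hlen] at this
      rw [this.1, this.2]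
      exact h1 _ _ _ hL
    · omega
    · obtain ⟨j, rfl⟩ := Nat.exists_eq_add_of_lt hgt
      have hj : j < M.length := by omega
      have hM : M = M.take j ++ M[j] :: M.drop (j + 1) := by
        rw [List.cons_getElem_drop_succ, List.take_append_drop]
      have hlen : (M.take j).length = j := by
        rw [List.length_take]; omega
      have := hright _ _ _ hM
      rw [hlen] at this
      have h5 := h3 _ _ _ hM
      rw [show L.length + j + 1 = L.length + 1 + j by omega]
      omega

theorem exists_map_beq (as bs : List Bool) (hl : as.length = bs.length)
    (h : ∀ i : ℕ, ¬ (as[i]? = some true ∧ bs[i]? = some true)) :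
    ∃ L : List (Option Bool), L.map (· == some false) = as ∧ L.map (· == some true) = bs := by
  induction as generalizing bs with
  | nil =>
    obtain rfl : bs = [] := List.length_eq_zero_iff.1 hl.symm
    exact ⟨[], rfl, rfl⟩
  | cons a as ih =>
    rcases bs with _ | ⟨b, bs⟩
    · simp at hl
    · obtain ⟨L, rfl, rfl⟩ := ih bs (by simpa using hl) fun i hi => h (i + 1) (by simpa using hi)
      have h0 := h 0
      rcases a with _ | _ <;> rcases b with _ | _
      · exact ⟨none :: L, by simp, by simp⟩
      · exact ⟨some true :: L, by simp, by simp⟩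
      · exact ⟨some false :: L, by simp, by simp⟩
      · simp at h0

theorem eq_of_map_beq_eq {L L' : List (Option Bool)}
    (h1 : L.map (· == some false) = L'.map (· == some false))
    (h2 : L.map (· == some true) = L'.map (· == some true)) : L = L' := by
  induction L generalizing L' with
  | nil =>
    rcases L' with _ | ⟨c, L'⟩
    · rfl
    · simp at h1
  | cons c L ih =>
    rcases L' with _ | ⟨c', L'⟩
    · simp at h1
    · simp only [List.map_cons, List.cons.injEq] at h1 h2
      rw [ih h1.2 h2.2]
      congr 1
      rcases c with _ | _ | _ <;> rcases c' with _ | _ | _ <;> simp_all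

theorem not_getElem?_map_beq (L : List (Option Bool)) (i : ℕ) (b : Bool) :
    ¬ ((L.map (· == some b))[i]? = some true ∧ (L.map (· == some !b))[i]? = some true) := by
  rintro ⟨h1, h2⟩
  rw [List.getElem?_map, Option.map_eq_some_iff] at h1 h2
  obtain ⟨c, hc, hc'⟩ := h1
  obtain ⟨d, hd, hd'⟩ := h2
  rw [hc, Option.some_inj] at hd
  simp_all

theorem getElem?_pair_iff (L M : List (Option Bool)) (i : ℕ) :
    (pairUp L M)[i]? = some true ∧ (pairDown L M)[i]? = some true ↔
      i = L.length ∨ i = L.length + M.length + 1 := by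
  rcases lt_trichotomy i L.length with h | rfl | h
  · rw [pairUp, pairDown, List.getElem?_append_left (by simpa using h),
      List.getElem?_append_left (by simpa using h)]
    have := not_getElem?_map_beq L.reverse i false
    simp only [Bool.not_false] at this
    constructor
    · exact fun h => absurd h this
    · omega
  · simp [pairUp, pairDown]
  · obtain ⟨j, rfl⟩ := Nat.exists_eq_add_of_lt h
    have hL : ∀ b, (L.reverse.map (· == some b)).length = L.length := by simp
    rw [pairUp, pairDown, List.getElem?_append_right (by rw [hL]; omega),
      List.getElem?_append_right (by rw [hL]; omega), hL, hL,
      show L.length + j + 1 - L.length = j + 1 by omega, List.getElem?_cons_succ,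
      List.getElem?_cons_succ]
    rcases lt_trichotomy j M.length with h' | rfl | h'
    · rw [List.getElem?_append_left (by simpa using h'),
        List.getElem?_append_left (by simpa using h')]
      have := not_getElem?_map_beq M j true
      simp only [Bool.not_true] at this
      constructor
      · exact fun h => absurd h this
      · omega
    · simp
    · rw [List.getElem?_eq_none (by simp; omega)]
      simp
      omega

theorem length_pairUp (L M : List (Option Bool)) :
    (pairUp L M).length = L.length + M.length + 2 := by
  simp [pairUp]; omega

theorem length_pairDown (L M : List (Option Bool)) :
    (pairDown L M).length = L.length + M.length + 2 := by
  simp [pairDown]; omega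

theorem pair_injective {L M L' M' : List (Option Bool)} (h1 : pairUp L M = pairUp L' M')
    (h2 : pairDown L M = pairDown L' M') : L = L' ∧ M = M' := by
  have hl := congrArg List.length h1
  rw [length_pairUp, length_pairUp] at hl
  have hi := (getElem?_pair_iff L M L.length).2 (Or.inl rfl)
  rw [h1, h2, getElem?_pair_iff] at hi
  have hL : L.length = L'.length := by omega
  obtain ⟨h3, h4⟩ := List.append_inj h1 (by simpa using hL)
  obtain ⟨h5, h6⟩ := List.append_inj h2 (by simpa using hL)
  refine ⟨List.reverse_injective (eq_of_map_beq_eq h3 h5), eq_of_map_beq_eq ?_ ?_⟩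
  · exact List.append_cancel_right (List.cons.inj h6).2
  · exact List.append_cancel_right (List.cons.inj h4).2

theorem mem_dyckRS_iff_gapPath {w : List Bool} {L M : List (Option Bool)} {n r s : ℕ}
    (hh : w.headD true = true) (hu : upFlags w = pairUp L M)
    (hd : downFlags w = pairDown L M) (hn : L.length + M.length + 2 = n) :
    (w ∈ dyckRS n r s ∧ returns n w = {n}) ↔
      ∃ h, GapPath r 0 (h + 1) L ∧ GapPath s 0 (h + 1) M := by
  have h1 : w.count true = n := by rw [← length_upFlags, hu, length_pairUp, hn]
  have h2 : w.count false = n := by rw [← length_downFlags, hd, length_pairDown, hn]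
  have hLM : L.count (some false) + M.count (some true) =
      L.count (some true) + M.count (some false) := by
    have := count_flags w
    rw [if_pos hh, hu, hd, pairUp, pairDown] at this
    simp only [List.count_append, List.count_cons_self, count_true_map, List.count_reverse]
      at this
    omega
  have hstrict : StrictPos n w ↔ ∃ h, RevPath (h + 1) L ∧ RevPath (h + 1) M := by
    rw [strictPos_iff (A := L.reverse.map (· == some false) ++ true :: M.map (· == some true))
      hh h1 h2 (by rw [hu, pairUp]; simp), hu, hd, ← hn, pair_condition_iff L M hLM]
  have hstar : ∀ j ∈ Finset.Icc 1 (n - 1), (0 < rStat w j ∧ 0 < sStat w j ↔ j = L.length + 1) := by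
    intro j hj
    rw [Finset.mem_Icc] at hj
    obtain ⟨j, rfl⟩ := Nat.exists_eq_add_of_le' hj.1
    rw [rStat_pos_iff w j (by omega), sStat_pos_iff w j (by omega), hu, hd, getElem?_pair_iff]
    omega
  have hmem : L.length + 1 ∈ Finset.Icc 1 (n - 1) := Finset.mem_Icc.2 (by omega)
  have hstats (h : StrictPos n w) :
      rStat w (L.length + 1) = gap (L.reverse.map (· == some true)) (L.count (some false)) ∧
      sStat w (L.length + 1) = gap (M.reverse.map (· == some true)) (M.count (some false)) := by
    have := h.stats_eq hu hd (by simp)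
    rwa [count_true_map_reverse, count_true_map, ← List.map_reverse, List.length_map,
      List.length_reverse] at this
  simp only [GapPath, zero_add, add_zero]
  constructor
  · rintro ⟨⟨hD, i, hi, hpos, hri, hsi, -⟩, hret⟩
    have hS := (isDyckWord_and_returns_iff n (by omega) w).1 ⟨hD, hret⟩
    obtain rfl := (hstar i hi).1 hpos
    obtain ⟨h, hL, hM⟩ := hstrict.1 hS
    exact ⟨h, ⟨hL, (hstats hS).1 ▸ hri⟩, hM, (hstats hS).2 ▸ hsi⟩
  · rintro ⟨h, ⟨hL, hrL⟩, hM, hsM⟩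
    have hS := hstrict.2 ⟨h, hL, hM⟩
    obtain ⟨hD, hret⟩ := (isDyckWord_and_returns_iff n (by omega) w).2 hS
    exact ⟨⟨hD, L.length + 1, hmem, (hstar _ hmem).2 rfl, (hstats hS).1.trans hrL,
      (hstats hS).2.trans hsM, fun j hj => (hstar j hj).1⟩, hret⟩

theorem exists_pair_of_mem_dyckRS {w : List Bool} {n r s : ℕ} (hw : w ∈ dyckRS n r s)
    (hret : returns n w = {n}) :
    ∃ L M, L.length + M.length + 2 = n ∧ upFlags w = pairUp L M ∧ downFlags w = pairDown L M := by
  obtain ⟨hD, i, hi, hpos, -, -, huniq⟩ := hw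
  rw [Finset.mem_Icc] at hi
  obtain ⟨i, rfl⟩ := Nat.exists_eq_add_of_le' hi.1
  obtain ⟨h1, h2, h3⟩ := (isDyckWord_and_returns_iff n (by omega) w).1 ⟨hD, hret⟩
  have hlu := length_upFlags w
  have hld := length_downFlags w
  have hstar : ∀ j, j + 1 < n → j ≠ i →
      ¬ ((upFlags w)[j]? = some true ∧ (downFlags w)[j]? = some true) := by
    intro j hj hji hc
    rw [← rStat_pos_iff w j (by omega), ← sStat_pos_iff w j (by omega)] at hc
    have := huniq (j + 1) (Finset.mem_Icc.2 (by omega)) hc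
    omega
  rw [rStat_pos_iff w i (by omega), sStat_pos_iff w i (by omega)] at hpos
  have hsplit : ∀ l : List Bool, l.length = n → NoTrail l → l[i]? = some true →
      l = l.take i ++ true :: ((l.drop (i + 1)).take (n - i - 2) ++ [true]) := by
    intro l hl hNT hil
    obtain ⟨m, rfl⟩ := hNT.eq_nil_or.resolve_left (by rintro rfl; simp at hl; omega)
    have hm : m.length + 1 = n := by simpa using hl
    rw [List.getElem?_append_left (by omega)] at hil
    obtain ⟨hi', hil⟩ := List.getElem?_eq_some_iff.1 hil
    rw [List.take_append_of_le_length (by omega), List.drop_append_of_le_length (by omega),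
      List.take_left' (by rw [List.length_drop]; omega), ← hil, ← List.cons_append,
      List.cons_getElem_drop_succ, ← List.append_assoc, List.take_append_drop]
  have hNTu : NoTrail (upFlags w) := by
    rcases List.eq_nil_or_concat w with rfl | ⟨v, x, rfl⟩
    · exact noTrail_nil
    · rw [List.concat_eq_append] at *
      rcases x with _ | _
      · exact noTrail_upFlags_append_false v
      · have := h3 v [true] rfl (by rintro rfl; simp at h2; omega) (by simp)
        simp at h1 h2
        omega
  have hup := hsplit _ (hlu.trans h1) hNTu hpos.1
  have hdown := hsplit _ (hld.trans h2) (noTrail_downFlags w) hpos.2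
  obtain ⟨L, hLu, hLd⟩ := exists_map_beq ((upFlags w).take i) ((downFlags w).take i)
    (by simp; omega) (by
      intro j
      by_cases hj : j < i
      · rw [List.getElem?_take_of_lt hj, List.getElem?_take_of_lt hj]
        exact hstar j (by omega) (by omega)
      · rw [List.getElem?_eq_none (by simp; omega)]
        simp)
  obtain ⟨M, hMd, hMu⟩ := exists_map_beq (((downFlags w).drop (i + 1)).take (n - i - 2))
    (((upFlags w).drop (i + 1)).take (n - i - 2)) (by simp; omega) (by
      intro j
      by_cases hj : j < n - i - 2
      · rw [List.getElem?_take_of_lt hj, List.getElem?_take_of_lt hj, List.getElem?_drop,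
          List.getElem?_drop, and_comm]
        exact hstar (i + 1 + j) (by omega) (by omega)
      · rw [List.getElem?_eq_none (by simp; omega)]
        simp)
  refine ⟨L.reverse, M, ?_, ?_, ?_⟩
  · have hL := congrArg List.length hLu
    have hM := congrArg List.length hMu
    simp at hL hM ⊢
    omega
  · rw [pairUp, List.reverse_reverse, hLu, hMu]
    exact hup
  · rw [pairDown, List.reverse_reverse, hLd, hMd]
    exact hdown

theorem exists_flags_eq_pair {L M : List (Option Bool)} {h : ℕ} (hL : RevPath h L)
    (hM : RevPath h M) :
    ∃ w : List Bool, w.headD true = true ∧ upFlags w = pairUp L M ∧ downFlags w = pairDown L M := by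
  refine exists_flags_eq _ _ true ?_ ?_ ?_
  · rw [pairUp, ← List.cons_append, ← List.append_assoc]
    exact noTrail_append_true _
  · rw [pairDown, ← List.cons_append, ← List.append_assoc]
    exact noTrail_append_true _
  · have h1 := hL.2
    have h2 := hM.2
    rw [pairUp, pairDown]
    simp only [List.count_append, List.count_cons_self, count_true_map]
    simp
    omega

theorem ncard_one_return (n r s : ℕ) (hn : 2 ≤ n) :
    {w | w ∈ dyckRS n r s ∧ returns n w = {n}}.ncard = (gapPairs r s (n - 2)).ncard := by
  have hex : ∀ x ∈ gapPairs r s (n - 2), ∃ w : List Bool, w.headD true = true ∧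
      upFlags w = pairUp x.1 x.2 ∧ downFlags w = pairDown x.1 x.2 := by
    rintro x ⟨-, h, h1, h2⟩
    exact exists_flags_eq_pair h1.1 h2.1
  choose f hf using hex
  symm
  refine Set.ncard_congr f ?_ ?_ ?_
  · intro x hx
    obtain ⟨h1, h2, h3⟩ := hf x hx
    exact (mem_dyckRS_iff_gapPath h1 h2 h3 (by have := hx.1; omega)).2 hx.2
  · intro x y hx hy he
    obtain ⟨-, h2, h3⟩ := hf x hx
    obtain ⟨-, h5, h6⟩ := hf y hy
    rw [he] at h2 h3
    exact Prod.ext_iff.2 (pair_injective (h2.symm.trans h5) (h3.symm.trans h6))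
  · rintro w ⟨hw, hret⟩
    obtain ⟨L, M, hlen, hu, hd⟩ := exists_pair_of_mem_dyckRS hw hret
    have hh := ((isDyckWord_and_returns_iff n (by omega) w).1 ⟨hw.1, hret⟩).headD_eq
    have hx : (L, M) ∈ gapPairs r s (n - 2) :=
      ⟨by simp only; omega, (mem_dyckRS_iff_gapPath hh hu hd hlen).1 ⟨hw, hret⟩⟩
    obtain ⟨h1, h2, h3⟩ := hf _ hx
    exact ⟨(L, M), hx, eq_of_flags_eq (h1.trans hh.symm) (h2.trans hu.symm) (h3.trans hd.symm)⟩

/-- **Lemma.** For `r, s ≥ 1` and `n ≥ r + s + 2`, the number of Dyck paths in `𝒟ₙ^{r,s}`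
whose only return is at the end is `Σ_{i=0}^{n-2-s-r} (i+1)·Mᵢ·T_{n-4-i, r+s-1}`. -/
theorem dyckRS_one_return_count (r s n : ℕ) (hr : 1 ≤ r) (hs : 1 ≤ s)
    (hn : r + s + 2 ≤ n) :
    ({w | w ∈ dyckRS n r s ∧ returns n w = {n}}.ncard : ℤ) =
      ∑ i ∈ Finset.Icc (0 : ℤ) ((n : ℤ) - 2 - s - r),
        (i + 1) * motzkinZ i * motzkinBallotZ ((n : ℤ) - 4 - i) (r + s - 1) := by
  obtain ⟨r, rfl⟩ := Nat.exists_eq_add_of_le' hr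
  obtain ⟨s, rfl⟩ := Nat.exists_eq_add_of_le' hs
  obtain ⟨N, rfl⟩ := Nat.exists_eq_add_of_le' (show 4 ≤ n by omega)
  have hzero : ∀ l < r + s, countLen (LeadPath (r + s) 0) l = 0 := fun l hl =>
    countLen_eq_zero fun L hL h => by
      have := lead_le_length L
      have := h.2
      omega
  rw [ncard_one_return _ _ _ (by omega), ncard_gapPairs,
    show N + 4 - 2 = N + 2 by omega]
  push_cast
  rw [sum_countLen_gapPath_mul r s N (N + 2) (by omega),
    Finset.Nat.sum_antidiagonal_eq_sum_range_succ_mk]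
  have hrange : Finset.range (N - (r + s) + 1) ⊆ Finset.range N.succ :=
    Finset.range_subset_range.2 (by omega)
  rw [← Finset.sum_subset hrange]
  · symm
    refine Finset.sum_nbij' Int.toNat (fun i : ℕ => (i : ℤ)) ?_ ?_ ?_ ?_ ?_
    · intro i hi
      rw [Finset.mem_Icc] at hi
      rw [Finset.mem_range]
      omega
    · intro i hi
      rw [Finset.mem_range] at hi
      rw [Finset.mem_Icc]
      omega
    · intro i hi
      exact Int.toNat_of_nonneg (Finset.mem_Icc.1 hi).1
    · intro i hi
      exact Int.toNat_natCast i
    · intro i hi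
      rw [Finset.mem_Icc] at hi
      obtain ⟨i, rfl⟩ := Int.eq_ofNat_of_zero_le hi.1
      rw [motzkinZ, if_pos hi.1, motzkinBallotZ, if_pos (by omega), Int.toNat_natCast,
        motzkin_eq_countLen, show r + 1 + (s + 1) - 1 = r + s + 1 by omega,
        motzkinBallot_eq_countLen,
        show ((N : ℤ) + 4 - 4 - i).toNat = N - i by omega]
  · intro i hi hi'
    rw [Finset.mem_range] at hi hi'
    rw [hzero (N - i) (by omega), Nat.cast_zero, mul_zero]
end

section
/- For every integer n ≥ 5, the number of Dyck paths D ∈ D̂_n with x_1(D) = 1 and y_2(D) = 0 equals M_{n-5}. -/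
/-- The number of letters before the first `b` of `w`. -/
def leadCount (b : Bool) : List Bool → ℕ
  | [] => 0
  | x :: w => if x = b then 0 else leadCount b w + 1

/-- The number of letters `!b` directly following the `i`-th (0-based) letter `b` of `w`. -/
def gapAfter (b : Bool) : List Bool → ℕ → ℕ
  | [], _ => 0
  | x :: w, i =>
    if x = b then
      match i with
      | 0 => leadCount b w
      | j + 1 => gapAfter b w j
    else gapAfter b w i

/-- For each letter `b` of `w`, in order, whether the next letter exists and is `!b`. -/
def switchFlags (b : Bool) : List Bool → List Bool
  | [] => []
  | x :: w =>
    if x = b then decide (w.head? = some (!b)) :: switchFlags b w else switchFlags b w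

theorem leadCount_pos_iff (b : Bool) (w : List Bool) :
    0 < leadCount b w ↔ w.head? = some (!b) := by
  cases w with
  | nil => simp [leadCount]
  | cons x w => cases x <;> cases b <;> simp [leadCount]

theorem length_switchFlags (b : Bool) (w : List Bool) :
    (switchFlags b w).length = w.count b := by
  induction w with
  | nil => rfl
  | cons x w ih => cases x <;> cases b <;> simp_all [switchFlags]

theorem switchFlags_getD (b : Bool) (w : List Bool) (i : ℕ) :
    (switchFlags b w).getD i false = true ↔ 0 < gapAfter b w i := by
  induction w generalizing i with
  | nil => simp [switchFlags, gapAfter]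
  | cons x w ih =>
    by_cases hx : x = b
    · cases i with
      | zero => simp [switchFlags, gapAfter, hx, leadCount_pos_iff]
      | succ i => simpa [switchFlags, gapAfter, hx] using ih i
    · simpa [switchFlags, gapAfter, hx] using ih i

theorem count_take_findIdxs_zero (b : Bool) (w : List Bool) (h : 0 < w.count b) :
    (w.take ((w.findIdxs (· == b)).getD 0 0)).count (!b) = leadCount b w := by
  induction w with
  | nil => simp at h
  | cons x w ih =>
    by_cases hx : x = b
    · simp [hx, leadCount]
    · have hx' : x = !b := by cases x <;> cases b <;> simp_all
      have hc : 0 < w.count b := by simpa [hx, List.count_cons] using h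
      have hl : 0 < (w.findIdxs (· == b)).length := by
        simpa [List.length_findIdxs, List.count] using hc
      have := ih hc
      rw [List.findIdxs_cons, List.findIdxs_start]
      simp only [List.getD_eq_getElem?_getD, List.getElem?_eq_getElem hl] at this
      simp [hx, List.getD_eq_getElem?_getD, List.getElem?_eq_getElem hl, leadCount]
      simpa [hx'] using this

theorem count_between_findIdxs (b : Bool) (w : List Bool) (i : ℕ) (h : i + 1 < w.count b) :
    ((w.take ((w.findIdxs (· == b)).getD (i + 1) 0)).drop
      ((w.findIdxs (· == b)).getD i 0 + 1)).count (!b) = gapAfter b w i := by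
  induction w generalizing i with
  | nil => simp at h
  | cons x w ih =>
    have hlen : (w.findIdxs (· == b)).length = w.count b := by
      simp [List.length_findIdxs, List.count]
    rw [List.findIdxs_cons, List.findIdxs_start]
    have hmap : ∀ j, j < w.count b → ((w.findIdxs (· == b)).map (· + (0 + 1))).getD j 0
        = (w.findIdxs (· == b)).getD j 0 + 1 := by
      intro j hj
      have hj' : j < (w.findIdxs (· == b)).length := by omega
      simp [List.getD_eq_getElem?_getD, List.getElem?_eq_getElem hj']
    by_cases hx : x = b
    · have hc : i < w.count b := by simpa [hx] using h
      cases i with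
      | zero =>
        have := hmap 0 hc
        simp only [hx, beq_self_eq_true, if_true, List.getD_cons_succ, List.getD_cons_zero, this]
        simpa [gapAfter] using count_take_findIdxs_zero b w hc
      | succ i =>
        simp only [hx, beq_self_eq_true, if_true, List.getD_cons_succ, hmap (i + 1) hc,
          hmap i (by omega)]
        simpa [gapAfter] using ih i hc
    · have hc : i + 1 < w.count b := by simpa [hx, List.count_cons] using h
      have hb : (x == b) = false := by simpa using hx
      simp only [hb, Bool.false_eq_true, if_false, hmap (i + 1) hc, hmap i (by omega)]
      simpa [gapAfter, hx] using ih i hc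

theorem rStat_succ (w : List Bool) (i : ℕ) (h : i + 1 < w.count true) :
    rStat w (i + 1) = gapAfter true w i :=
  count_between_findIdxs true w i h

theorem sStat_succ (w : List Bool) (i : ℕ) (h : i + 1 < w.count false) :
    sStat w (i + 1) = gapAfter false w i :=
  count_between_findIdxs false w i h

/-- The gap after the `i`-th letter `b` equals one exactly when the first letter `!b` of that gap
(whose index `m` among the letters `!b` is pinned down by counting switches) is followed by `b`. -/
theorem gapAfter_eq_one_iff (b : Bool) (w : List Bool) (i m : ℕ) (hi : i + 1 < w.count b)
    (hflag : (switchFlags b w).getD i false = true)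
    (hm : w.head? = some b ∧ m = 0 ∨ 0 < m ∧ (switchFlags (!b) w).getD (m - 1) false = true)
    (hcount : ((switchFlags (!b) w).take m).count true
      = ((switchFlags b w).take i).count true + if w.head? = some b then 0 else 1) :
    gapAfter b w i = 1 ↔ (switchFlags (!b) w).getD m false = true := by
  induction w generalizing i m with
  | nil => simp at hi
  | cons x w ih =>
    by_cases hx : x = b
    · subst hx
      have hc : i < w.count x := by simpa using hi
      cases i with
      | zero =>
        have hw : w.head? = some (!x) := by simpa [switchFlags] using hflag
        obtain ⟨t, rfl⟩ : ∃ t, w = (!x) :: t := by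
          cases w with
          | nil => simp at hw
          | cons y t => exact ⟨t, by simpa using hw⟩
        have hm0 : m = 0 := by
          rcases hm with hm | ⟨hm, hf⟩
          · exact hm.2
          · exfalso
            obtain ⟨k, rfl⟩ : ∃ k, m = k + 1 := ⟨m - 1, by omega⟩
            simp only [List.head?_cons, if_true, List.take_zero, List.count_nil, Nat.add_zero,
              List.count_eq_zero] at hcount
            apply hcount
            simp only [Nat.add_sub_cancel] at hf
            rw [List.mem_take_iff_getElem]
            by_cases hk : k < (switchFlags (!x) (x :: (!x) :: t)).length
            · refine ⟨k, by omega, ?_⟩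
              rwa [List.getD_eq_getElem _ _ hk] at hf
            · rw [List.getD_eq_default _ _ (by omega)] at hf
              simp at hf
        subst hm0
        cases t with
        | nil => cases x <;> simp at hc
        | cons y t => cases x <;> cases y <;> simp [gapAfter, leadCount, switchFlags]
      | succ i =>
        have hne : switchFlags (!x) (x :: w) = switchFlags (!x) w := by
          cases x <;> simp [switchFlags]
        rw [hne] at hm hcount ⊢
        have hg : gapAfter x (x :: w) (i + 1) = gapAfter x w i := by simp [gapAfter]
        rw [hg]
        have hs : switchFlags x (x :: w) = decide (w.head? = some (!x)) :: switchFlags x w := by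
          simp [switchFlags]
        rw [hs] at hflag hcount
        have hwne : w ≠ [] := by rintro rfl; simp at hc
        obtain ⟨y, t, rfl⟩ := List.exists_cons_of_ne_nil hwne
        refine ih i m hc (by simpa using hflag) ?_ ?_
        · rcases hm with ⟨-, rfl⟩ | hm
          · left
            refine ⟨?_, rfl⟩
            cases x <;> cases y <;> simp_all
          · exact Or.inr hm
        · cases x <;> cases y <;> simp_all
    · have hx' : x = !b := by cases x <;> cases b <;> simp_all
      subst hx'
      have hm' : 0 < m ∧ (switchFlags (!b) ((!b) :: w)).getD (m - 1) false = true := by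
        rcases hm with hm | hm
        · simp at hm
        · exact hm
      obtain ⟨hm0, hm1⟩ := hm'
      obtain ⟨k, rfl⟩ : ∃ k, m = k + 1 := ⟨m - 1, by omega⟩
      have hs : switchFlags (!b) ((!b) :: w) = decide (w.head? = some b) :: switchFlags (!b) w := by
        simp [switchFlags]
      have hs' : switchFlags b ((!b) :: w) = switchFlags b w := by simp [switchFlags]
      have hg : gapAfter b ((!b) :: w) i = gapAfter b w i := by simp [gapAfter]
      rw [hs] at hm1 hcount ⊢
      rw [hs'] at hflag hcount
      rw [hg]
      have hc : i + 1 < w.count b := by simpa using hi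
      simp only [List.getD_cons_succ]
      refine ih i k hc hflag ?_ ?_
      · cases k with
        | zero =>
          left
          simpa using hm1
        | succ k => right; simpa using hm1
      · by_cases hh : w.head? = some b
        · simp [hh] at hcount ⊢
          omega
        · simpa [hh] using hcount

theorem switchFlags_cons_self (b : Bool) (w : List Bool) :
    switchFlags b (b :: w) = decide (w.head? = some (!b)) :: switchFlags b w := by
  simp [switchFlags]

theorem switchFlags_injective {w w' : List Bool} (hh : w.head? = w'.head?)
    (ht : switchFlags true w = switchFlags true w')
    (hf : switchFlags false w = switchFlags false w') : w = w' := by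
  induction w generalizing w' with
  | nil => cases w' with
    | nil => rfl
    | cons y t => simp at hh
  | cons x w ih =>
    cases w' with
    | nil => simp at hh
    | cons y t =>
      obtain rfl : x = y := by simpa using hh
      congr 1
      have hl1 := congrArg List.length ht
      have hl2 := congrArg List.length hf
      simp only [length_switchFlags] at hl1 hl2
      rcases w with _ | ⟨z, w⟩ <;> rcases t with _ | ⟨z', t⟩
      · rfl
      · cases x <;> cases z' <;> simp at hl1 hl2
      · cases x <;> cases z <;> simp at hl1 hl2
      · apply ih <;> cases x <;> cases z <;> cases z' <;> simp_all [switchFlags]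

theorem switchFlags_true_getLast? {w : List Bool} (hw : w.getLast? = some false) :
    ∀ x ∈ (switchFlags true w).getLast?, x = true := by
  induction w with
  | nil => simp [switchFlags]
  | cons x w ih =>
    rcases w with _ | ⟨y, w⟩
    · have : x = false := by simpa using hw
      subst this
      simp [switchFlags]
    · have hw' : (y :: w).getLast? = some false := by simpa [List.getLast?_cons_cons] using hw
      have ih' := ih hw'
      cases x
      · simpa [switchFlags] using ih'
      · rw [switchFlags_cons_self]
        cases hs : switchFlags true (y :: w) with
        | nil => cases y <;> simp_all [switchFlags]
        | cons z l => rw [hs] at ih'; simpa [List.getLast?_cons_cons] using ih'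

theorem switchFlags_false_getLast? {w : List Bool} (hw : w.getLast? = some false) :
    (switchFlags false w).getLast? = some false := by
  induction w with
  | nil => simp at hw
  | cons x w ih =>
    rcases w with _ | ⟨y, w⟩
    · have : x = false := by simpa using hw
      subst this
      simp [switchFlags]
    · have hw' : (y :: w).getLast? = some false := by simpa [List.getLast?_cons_cons] using hw
      have ih' := ih hw'
      cases x
      · rw [switchFlags_cons_self]
        cases hs : switchFlags false (y :: w) with
        | nil => simp [hs] at ih'
        | cons z l => rw [hs] at ih'; simpa [List.getLast?_cons_cons] using ih'
      · simpa [switchFlags] using ih'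

theorem count_switchFlags {w : List Bool} (hw : w.getLast? = some false) :
    (switchFlags true w).count true + (if w.head? = some false then 1 else 0)
      = (switchFlags false w).count true + 1 := by
  induction w with
  | nil => simp at hw
  | cons x w ih =>
    rcases w with _ | ⟨y, w⟩
    · have : x = false := by simpa using hw
      subst this
      simp [switchFlags]
    · have hw' : (y :: w).getLast? = some false := by simpa [List.getLast?_cons_cons] using hw
      have ih' := ih hw'
      cases x <;> cases y <;> simp_all [switchFlags]

/-- Staying above the axis, expressed through the switch flags. -/
theorem prefix_count_le_iff {w : List Bool} (hw : w.getLast? = some false) (h : ℕ) :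
    (∀ p : List Bool, p <+: w → p.count false ≤ p.count true + h) ↔
      ∀ k, k + h + 1 ≤ w.count false →
        ((switchFlags true w).take k).count true + (if w.head? = some false then 1 else 0)
          ≤ ((switchFlags false w).take (k + h)).count true := by
  induction w generalizing h with
  | nil => simp at hw
  | cons x w ih =>
    have hcons : (∀ p : List Bool, p <+: x :: w → p.count false ≤ p.count true + h) ↔
        ∀ p : List Bool, p <+: w → (x :: p).count false ≤ (x :: p).count true + h := by
      constructor
      · intro H p hp
        exact H _ (by simpa using hp)
      · intro H p hp
        rcases p with _ | ⟨y, p⟩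
        · simp
        · obtain ⟨rfl, hp'⟩ := List.cons_prefix_cons.1 hp
          exact H p hp'
    rw [hcons]
    rcases w with _ | ⟨y, w⟩
    · have : x = false := by simpa using hw
      subst this
      simp only [List.prefix_nil, forall_eq]
      cases h with
      | zero => simp [switchFlags]
      | succ h => simp [switchFlags]
    · have hw' : (y :: w).getLast? = some false := by simpa [List.getLast?_cons_cons] using hw
      cases x
      · cases h with
        | zero =>
          constructor
          · intro H
            have := H [] (by simp)
            simp at this
          · intro H
            have := H 0 (by simp)
            simp at this
        | succ h =>
          have ih' := ih hw' h
          have e : (∀ p : List Bool, p <+: y :: w →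
              (false :: p).count false ≤ (false :: p).count true + (h + 1)) ↔
              ∀ p : List Bool, p <+: y :: w → p.count false ≤ p.count true + h := by
            refine forall_congr' fun p => imp_congr_right fun _ => ?_
            simp
            omega
          rw [e, ih']
          refine forall_congr' fun k => ?_
          rw [switchFlags_cons_self]
          have e2 : switchFlags true (false :: y :: w) = switchFlags true (y :: w) := by
            simp [switchFlags]
          rw [e2, show k + (h + 1) = (k + h) + 1 by omega, List.take_succ_cons]
          cases y <;> simp
      · have ih' := ih hw' (h + 1)
        have e : (∀ p : List Bool, p <+: y :: w →
            (true :: p).count false ≤ (true :: p).count true + h) ↔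
            ∀ p : List Bool, p <+: y :: w → p.count false ≤ p.count true + (h + 1) := by
          refine forall_congr' fun p => imp_congr_right fun _ => ?_
          simp
          omega
        rw [e, ih', switchFlags_cons_self]
        have e2 : switchFlags false (true :: y :: w) = switchFlags false (y :: w) := by
          simp [switchFlags]
        rw [e2]
        constructor
        · intro H k hk
          cases k with
          | zero => simp
          | succ k =>
            have := H k (by simp at hk ⊢; omega)
            rw [List.take_succ_cons, show k + 1 + h = k + (h + 1) by omega]
            cases y <;> simp at this ⊢ <;> omega
        · intro H k hk
          have := H (k + 1) (by simp at hk ⊢; omega)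
          rw [List.take_succ_cons, show k + 1 + h = k + (h + 1) by omega] at this
          cases y <;> simp at this ⊢ <;> omega

/-- Every admissible pair of flag lists comes from a word; `b` is the first letter of the word. -/
theorem exists_word_of_flags (N : ℕ) : ∀ (b : Bool) (l m : List Bool), l.length + m.length = N →
    (∀ x ∈ l.getLast?, x = true) → m.getLast? = some false →
    l.count true = m.count true + (if b then 1 else 0) →
    ∃ w : List Bool, w.head? = some b ∧ w.getLast? = some false ∧
      switchFlags true w = l ∧ switchFlags false w = m := by
  induction N with
  | zero =>
    intro b l m hN _ hm
    obtain rfl : m = [] := List.length_eq_zero_iff.1 (by omega)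
    simp at hm
  | succ N ih =>
    intro b l m hN hl hm hc
    have key : ∀ (w : List Bool) (c : Bool), w.head? = some c → w.getLast? = some false →
        (b :: w).getLast? = some false := by
      intro w c hw hw'
      cases w with
      | nil => simp at hw
      | cons y w => simpa [List.getLast?_cons_cons] using hw'
    cases b
    · rcases m with _ | ⟨a, m⟩
      · simp at hm
      · rcases m with _ | ⟨a', m⟩
        · obtain rfl : a = false := by simpa using hm
          have : l = [] := by
            by_contra hne
            have hlast := hl _ (List.getLast?_eq_getLast_of_ne_nil hne)
            have hmem := List.getLast_mem hne
            rw [hlast] at hmem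
            have := List.count_pos_iff.2 hmem
            simp at hc
            omega
          subst this
          exact ⟨[false], by simp [switchFlags]⟩
        · have hm' : (a' :: m).getLast? = some false := by
            simpa [List.getLast?_cons_cons] using hm
          obtain ⟨w, hw1, hw2, hw3, hw4⟩ := ih a l (a' :: m)
            (by simp at hN ⊢; omega) hl hm' (by
              rw [List.count_cons] at hc
              cases a <;> simp_all)
          refine ⟨false :: w, rfl, key w _ hw1 hw2, ?_, ?_⟩
          · simpa [switchFlags] using hw3
          · rw [switchFlags_cons_self, hw4, hw1]
            cases a <;> simp
    · rcases l with _ | ⟨a, l⟩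
      · simp at hc
      · have hl' : ∀ x ∈ l.getLast?, x = true := by
          cases l with
          | nil => simp
          | cons z l => simpa [List.getLast?_cons_cons] using hl
        obtain ⟨w, hw1, hw2, hw3, hw4⟩ := ih (!a) l m (by simp at hN ⊢; omega) hl' hm (by
          cases a <;> simp_all)
        refine ⟨true :: w, rfl, key w _ hw1 hw2, ?_, ?_⟩
        · rw [switchFlags_cons_self, hw3, hw1]
          cases a <;> simp
        · simpa [switchFlags] using hw4

/-- A path whose step `(x, y)` goes down by `x` and up by `y`, started at height `h`, is at height
at least `0` before each of its steps. -/
def StaysNonneg : ℤ → List (Bool × Bool) → Prop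
  | _, [] => True
  | h, x :: X => 0 ≤ h ∧ StaysNonneg (h + x.2.toNat - x.1.toNat) X

theorem staysNonneg_append (h : ℤ) (X Y : List (Bool × Bool)) :
    StaysNonneg h (X ++ Y) ↔
      StaysNonneg h X ∧ StaysNonneg (h + X.countP (·.2) - X.countP (·.1)) Y := by
  induction X generalizing h with
  | nil => simp [StaysNonneg]
  | cons x X ih =>
    obtain ⟨x1, x2⟩ := x
    have e : h + (x2.toNat : ℤ) - x1.toNat + X.countP (·.2) - X.countP (·.1) =
        h + ((x1, x2) :: X).countP (·.2) - ((x1, x2) :: X).countP (·.1) := by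
      cases x1 <;> cases x2 <;> simp <;> ring
    simp only [List.cons_append, StaysNonneg, ih, e, and_assoc]

theorem staysNonneg_iff_take (h : ℤ) (X : List (Bool × Bool)) :
    StaysNonneg h X ↔
      ∀ k < X.length, ((X.take k).countP (·.1) : ℤ) ≤ (X.take k).countP (·.2) + h := by
  induction X generalizing h with
  | nil => simp [StaysNonneg]
  | cons x X ih =>
    obtain ⟨x1, x2⟩ := x
    simp only [StaysNonneg, ih]
    constructor
    · rintro ⟨h0, H⟩ k hk
      cases k with
      | zero => simpa using h0
      | succ k =>
        have := H k (by simpa using hk)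
        cases x1 <;> cases x2 <;> simp at this ⊢ <;> omega
    · intro H
      refine ⟨by simpa using H 0 (by simp), fun k hk => ?_⟩
      have := H (k + 1) (by simpa using hk)
      cases x1 <;> cases x2 <;> simp at this ⊢ <;> omega

theorem staysNonneg_of_countP_le {h : ℤ} {X : List (Bool × Bool)}
    (hX : (X.countP (·.1) : ℤ) ≤ h) : StaysNonneg h X := by
  rw [staysNonneg_iff_take]
  intro k _
  have : (X.take k).countP (·.1) ≤ X.countP (·.1) :=
    (List.take_sublist k X).countP_le
  omega

/-- Balanced paths: a path that stays weakly above the axis and ends with a step to height `-1`. -/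
def IsClosedPath (X : List (Bool × Bool)) : Prop :=
  X.getLast? = some (true, false) ∧ X.countP (·.1) = X.countP (·.2) + 1 ∧ StaysNonneg 0 X

/-- The list recording, for each `i`, whether the `i`-th up step is followed by a down step, and
whether the `i`-th down step is followed by an up step. -/
def flagPairs (w : List Bool) : List (Bool × Bool) :=
  List.zip (switchFlags true w) (switchFlags false w)

theorem map_flagPairs {w : List Bool} (hw : w.count true = w.count false) :
    (flagPairs w).map Prod.fst = switchFlags true w ∧
      (flagPairs w).map Prod.snd = switchFlags false w := by
  constructor
  · exact List.map_fst_zip (by simp [length_switchFlags, hw])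
  · exact List.map_snd_zip (by simp [length_switchFlags, hw])

theorem countP_fst_eq (X : List (Bool × Bool)) :
    X.countP (·.1) = (X.map Prod.fst).count true := by
  simp only [List.count, List.countP_map]
  congr 1
  funext x
  simp

theorem countP_snd_eq (X : List (Bool × Bool)) :
    X.countP (·.2) = (X.map Prod.snd).count true := by
  simp only [List.count, List.countP_map]
  congr 1
  funext x
  simp

theorem dyckWord_head_last {n : ℕ} {w : List Bool} (hn : 0 < n) (hw : IsDyckWord n w) :
    w.head? = some true ∧ w.getLast? = some false := by
  obtain ⟨hlen, ht, hf, hp⟩ := hw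
  have hne : w ≠ [] := by rintro rfl; simp at hlen; omega
  constructor
  · obtain ⟨x, t, rfl⟩ := List.exists_cons_of_ne_nil hne
    have := hp [x] (by simp)
    cases x <;> simp_all
  · obtain ⟨t, x, rfl⟩ := List.eq_nil_or_concat' w |>.resolve_left hne
    have := hp t (by simp)
    cases x
    · simp
    · simp at ht hf
      omega

theorem prefix_iff_staysNonneg {n : ℕ} {w : List Bool} (hh : w.head? = some true)
    (hl : w.getLast? = some false) (ht : w.count true = n) (hf : w.count false = n) :
    (∀ p : List Bool, p <+: w → p.count false ≤ p.count true) ↔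
      StaysNonneg 0 (flagPairs w) := by
  have h := prefix_count_le_iff hl 0
  simp only [Nat.add_zero] at h
  rw [h, staysNonneg_iff_take]
  obtain ⟨h1, h2⟩ := map_flagPairs (ht.trans hf.symm)
  have hlen : (flagPairs w).length = n := by
    have := congrArg List.length h1
    simpa [length_switchFlags, ht] using this
  simp only [hlen, hf, hh, countP_fst_eq, countP_snd_eq, List.map_take, h1, h2]
  simp

theorem length_flagPairs {n : ℕ} {w : List Bool} (hw : IsDyckWord n w) :
    (flagPairs w).length = n := by
  simp [flagPairs, length_switchFlags, hw.2.1, hw.2.2.1]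

theorem isClosedPath_flagPairs {n : ℕ} {w : List Bool} (hn : 0 < n) (hw : IsDyckWord n w) :
    IsClosedPath (flagPairs w) := by
  obtain ⟨hh, hl⟩ := dyckWord_head_last hn hw
  have hlen := length_flagPairs hw
  obtain ⟨h1, h2⟩ := map_flagPairs (hw.2.1.trans hw.2.2.1.symm)
  refine ⟨?_, ?_, (prefix_iff_staysNonneg hh hl hw.2.1 hw.2.2.1).1 hw.2.2.2⟩
  · have h3 := switchFlags_true_getLast? hl
    have h4 := switchFlags_false_getLast? hl
    rw [← h1] at h3
    rw [← h2] at h4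
    have hne : flagPairs w ≠ [] := by
      intro h
      rw [h] at hlen
      simp at hlen
      omega
    obtain ⟨t, ⟨x, y⟩, h⟩ := List.eq_nil_or_concat' (flagPairs w) |>.resolve_left hne
    rw [h] at h3 h4 ⊢
    simp at h3 h4 ⊢
    exact ⟨h3, h4⟩
  · have := count_switchFlags hl
    rw [countP_fst_eq, countP_snd_eq, h1, h2]
    simpa [hh] using this

theorem flagPairs_injOn {n : ℕ} (hn : 0 < n) : Set.InjOn flagPairs {w | IsDyckWord n w} := by
  intro w hw w' hw' h
  obtain ⟨h1, h2⟩ := map_flagPairs (hw.2.1.trans hw.2.2.1.symm)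
  obtain ⟨h1', h2'⟩ := map_flagPairs (hw'.2.1.trans hw'.2.2.1.symm)
  apply switchFlags_injective
  · rw [(dyckWord_head_last hn hw).1, (dyckWord_head_last hn hw').1]
  · rw [← h1, ← h1', h]
  · rw [← h2, ← h2', h]

theorem exists_dyckWord_flagPairs {X : List (Bool × Bool)} (hX : IsClosedPath X) :
    ∃ w, IsDyckWord X.length w ∧ flagPairs w = X := by
  obtain ⟨hlast, hc, hs⟩ := hX
  obtain ⟨w, hh, hl, ht, hf⟩ := exists_word_of_flags _ true (X.map Prod.fst) (X.map Prod.snd) rfl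
    (by simp [List.getLast?_map, hlast]) (by simp [List.getLast?_map, hlast])
    (by rw [← countP_fst_eq, ← countP_snd_eq]; simpa using hc)
  have hX' : flagPairs w = X := by
    rw [flagPairs, ht, hf]
    exact (List.zip_of_prod rfl rfl).symm
  have hct : w.count true = X.length := by simp [← length_switchFlags, ht]
  have hcf : w.count false = X.length := by simp [← length_switchFlags, hf]
  refine ⟨w, ⟨?_, hct, hcf, ?_⟩, hX'⟩
  · have := List.count_true_add_count_false w
    omega
  · rw [prefix_iff_staysNonneg hh hl hct hcf, hX']
    exact hs

/-- The step of a closed path corresponding to a Motzkin step. -/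
def motzkinStep : Option Bool → Bool × Bool
  | none => (false, false)
  | some true => (false, true)
  | some false => (true, false)

/-- A Motzkin word, as a path with a final additional down step. -/
def closeMotzkin (Q : List (Option Bool)) : List (Bool × Bool) :=
  Q.map motzkinStep ++ [(true, false)]

theorem motzkinStep_injective : Function.Injective motzkinStep := by
  intro a b h
  rcases a with _ | _ | _ <;> rcases b with _ | _ | _ <;> simp_all [motzkinStep]

theorem closeMotzkin_injective : Function.Injective closeMotzkin := by
  intro Q Q' h
  exact List.map_injective_iff.2 motzkinStep_injective (List.append_cancel_right h)

theorem countP_fst_map_motzkinStep (Q : List (Option Bool)) :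
    (Q.map motzkinStep).countP (·.1) = Q.count (some false) := by
  induction Q with
  | nil => rfl
  | cons a Q ih => rcases a with _ | _ | _ <;> simp [motzkinStep, ih]

theorem countP_snd_map_motzkinStep (Q : List (Option Bool)) :
    (Q.map motzkinStep).countP (·.2) = Q.count (some true) := by
  induction Q with
  | nil => rfl
  | cons a Q ih => rcases a with _ | _ | _ <;> simp [motzkinStep, ih]

theorem isMotzkinWord_iff (Q : List (Option Bool)) :
    IsMotzkinWord Q ↔ IsClosedPath (closeMotzkin Q) := by
  have h1 := countP_fst_map_motzkinStep Q
  have h2 := countP_snd_map_motzkinStep Q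
  have key : StaysNonneg 0 (closeMotzkin Q) ↔
      ∀ p : List (Option Bool), p <+: Q → p.count (some false) ≤ p.count (some true) := by
    rw [staysNonneg_iff_take]
    have e : ∀ k ≤ Q.length, (closeMotzkin Q).take k = (Q.take k).map motzkinStep := by
      intro k hk
      rw [closeMotzkin, List.take_append_of_le_length (by simpa using hk), List.map_take]
    constructor
    · intro H p hp
      have hle := hp.length_le
      have := H p.length (by simp [closeMotzkin]; omega)
      rw [e _ hle, ← List.prefix_iff_eq_take.1 hp, countP_fst_map_motzkinStep,
        countP_snd_map_motzkinStep] at this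
      omega
    · intro H k hk
      rw [e k (by simp [closeMotzkin] at hk; omega), countP_fst_map_motzkinStep,
        countP_snd_map_motzkinStep]
      have := H _ (List.take_prefix k Q)
      omega
  rw [IsMotzkinWord, IsClosedPath, key]
  simp [closeMotzkin, h1, h2]

/-- Insert a down step directly before the `k`-th (0-based) descending step. -/
def insertDown : ℕ → List (Bool × Bool) → List (Bool × Bool)
  | _, [] => []
  | k, x :: X =>
    if x.1 then
      match k with
      | 0 => (true, false) :: x :: X
      | k + 1 => x :: insertDown k X
    else x :: insertDown k X

/-- Remove the `k`-th (0-based) descending step. -/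
def removeDown : ℕ → List (Bool × Bool) → List (Bool × Bool)
  | _, [] => []
  | k, x :: X =>
    if x.1 then
      match k with
      | 0 => X
      | k + 1 => x :: removeDown k X
    else x :: removeDown k X

theorem removeDown_insertDown (k : ℕ) (X : List (Bool × Bool)) :
    removeDown k (insertDown k X) = X := by
  induction X generalizing k with
  | nil => rfl
  | cons x X ih =>
    by_cases hx : x.1 = true
    · cases k with
      | zero => simp [insertDown, removeDown, hx]
      | succ k => simp [insertDown, removeDown, hx, ih]
    · simp [insertDown, removeDown, hx, ih]

theorem insertDown_append (p q : List (Bool × Bool)) :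
    insertDown (p.countP (·.1)) (p ++ (true, false) :: q)
      = p ++ (true, false) :: (true, false) :: q := by
  induction p with
  | nil => simp [insertDown]
  | cons x p ih =>
    by_cases hx : x.1 = true
    · simp [insertDown, hx, ih]
    · simp [insertDown, hx, ih]

/-- The map from closed Motzkin paths to flag lists with two double flags: cut the path at its
first down step, and double the down step that follows the first `g` ones of the second piece,
where `g` is the number of up steps of the first piece. -/
def expandPath (Y : List (Bool × Bool)) : List (Bool × Bool) :=
  (false, true) :: (true, true) :: (Y.takeWhile (fun x => !x.1) ++
    (true, true) :: insertDown ((Y.takeWhile (fun x => !x.1)).countP (·.2))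
      (Y.dropWhile (fun x => !x.1)))

theorem takeWhile_dropWhile_append_cons {v R : List (Bool × Bool)} {x : Bool × Bool}
    (hv : ∀ y ∈ v, y.1 = false) (hx : x.1 = true) :
    (v ++ x :: R).takeWhile (fun x => !x.1) = v ∧
      (v ++ x :: R).dropWhile (fun x => !x.1) = x :: R := by
  constructor
  · rw [List.takeWhile_append_of_pos (by simpa using hv)]
    simp [hx]
  · rw [List.dropWhile_append_of_pos (by simpa using hv)]
    simp [hx]

theorem expandPath_injective : Function.Injective expandPath := by
  intro Y Y' h
  have hv : ∀ Z : List (Bool × Bool), ∀ y ∈ Z.takeWhile (fun x => !x.1), y.1 = false := by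
    intro Z y hy
    simpa using List.mem_takeWhile_imp hy
  simp only [expandPath, List.cons.injEq, true_and] at h
  have h1 := takeWhile_dropWhile_append_cons (x := (true, true))
    (R := insertDown ((Y.takeWhile (fun x => !x.1)).countP (·.2)) (Y.dropWhile (fun x => !x.1)))
    (hv Y) rfl
  have h2 := takeWhile_dropWhile_append_cons (x := (true, true))
    (R := insertDown ((Y'.takeWhile (fun x => !x.1)).countP (·.2)) (Y'.dropWhile (fun x => !x.1)))
    (hv Y') rfl
  rw [h] at h1
  have ht := h1.1.symm.trans h2.1
  have hd := List.tail_eq_of_cons_eq (h1.2.symm.trans h2.2)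
  rw [ht] at hd
  have hd' := congrArg (removeDown ((Y'.takeWhile (fun x => !x.1)).countP (·.2))) hd
  rw [removeDown_insertDown, removeDown_insertDown] at hd'
  rw [← List.takeWhile_append_dropWhile (p := fun x => !x.1) (l := Y), ht, hd',
    List.takeWhile_append_dropWhile]

theorem expandPath_append {v p q : List (Bool × Bool)} (hv : ∀ y ∈ v, y.1 = false)
    (hp : ∀ x ∈ p.head?, x.1 = true) (hc : p.countP (·.1) = v.countP (·.2)) :
    expandPath (v ++ (p ++ (true, false) :: q)) =
      (false, true) :: (true, true) ::
        (v ++ (true, true) :: (p ++ (true, false) :: (true, false) :: q)) := by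
  obtain ⟨x, R, hR, hx⟩ : ∃ x R, p ++ (true, false) :: q = x :: R ∧ x.1 = true := by
    cases p with
    | nil => exact ⟨_, _, rfl, rfl⟩
    | cons x p => exact ⟨x, _, rfl, by simpa using hp⟩
  have h := takeWhile_dropWhile_append_cons (R := R) hv hx
  rw [← hR] at h
  rw [expandPath, h.1, h.2, ← hc, insertDown_append]

theorem exists_split_at_fst {R : List (Bool × Bool)} {k : ℕ} (hk : k < R.countP (·.1)) :
    ∃ p x q, R = p ++ x :: q ∧ x.1 = true ∧ p.countP (·.1) = k := by
  induction R generalizing k with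
  | nil => simp at hk
  | cons x R ih =>
    by_cases hx : x.1 = true
    · cases k with
      | zero => exact ⟨[], x, R, rfl, hx, rfl⟩
      | succ k =>
        obtain ⟨p, y, q, h1, h2, h3⟩ := ih (k := k) (by simpa [hx] using hk)
        exact ⟨x :: p, y, q, by rw [h1]; rfl, h2, by simp [hx, h3]⟩
    · obtain ⟨p, y, q, h1, h2, h3⟩ := ih (k := k) (by simpa [hx] using hk)
      exact ⟨x :: p, y, q, by rw [h1]; rfl, h2, by simp [hx, h3]⟩

/-- The shape of the flag lists of the Dyck paths being counted. -/
def HatShape (X : List (Bool × Bool)) : Prop :=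
  ∃ v p q : List (Bool × Bool),
    X = (false, true) :: (true, true) ::
      (v ++ (true, true) :: (p ++ (true, false) :: (true, false) :: q)) ∧
    (∀ y ∈ v, y.1 = false) ∧ (∀ x ∈ p.head?, x.1 = true) ∧
    p.countP (·.1) = v.countP (·.2) ∧ (true, true) ∉ p ∧ (true, true) ∉ q

theorem isClosedPath_expand_iff {v p q : List (Bool × Bool)} (hv : ∀ y ∈ v, y.1 = false)
    (hc : p.countP (·.1) = v.countP (·.2)) :
    IsClosedPath ((false, true) :: (true, true) ::
        (v ++ (true, true) :: (p ++ (true, false) :: (true, false) :: q))) ↔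
      IsClosedPath (v ++ (p ++ (true, false) :: q)) := by
  have hv0 : v.countP (·.1) = 0 := by simpa [List.countP_eq_zero] using hv
  unfold IsClosedPath
  refine and_congr ?_ (and_congr ?_ ?_)
  · simp [List.getLast?_cons, List.getLast?_append]
  · simp [hv0]
    omega
  · simp only [StaysNonneg, staysNonneg_append, hv0, hc]
    have h1 : ∀ h : ℤ, 0 ≤ h → StaysNonneg h v := fun h hh =>
      staysNonneg_of_countP_le (by rw [hv0]; simpa using hh)
    have h2 : ∀ h : ℤ, (v.countP (·.2) : ℤ) ≤ h → StaysNonneg h p := fun h hh =>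
      staysNonneg_of_countP_le (by rw [hc]; exact hh)
    have e1 := h1 1 (by omega)
    have e2 := h1 0 le_rfl
    have e3 := h2 (0 + v.countP (·.2) - (0 : ℕ)) (by simp)
    have e4 := h2 (1 + v.countP (·.2)) (by simp)
    simp [e1, e2, e4]
    simp at e3
    simp only [e3, true_and]
    have e5 : (1 + v.countP (·.2) + p.countP (·.2) - v.countP (·.2) - 1 - 1 : ℤ)
        = p.countP (·.2) - 1 := by ring
    rw [e5]
    constructor
    · rintro ⟨-, -, -, h⟩
      exact h
    · intro h
      exact ⟨by omega, by omega, by omega, h⟩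

theorem exists_closeMotzkin_eq {Y : List (Bool × Bool)} (hY : (true, true) ∉ Y)
    (hlast : Y.getLast? = some (true, false)) : ∃ Q, Y = closeMotzkin Q := by
  obtain ⟨t, rfl⟩ : ∃ t, Y = t ++ [(true, false)] := List.getLast?_eq_some_iff.1 hlast
  have ht : ∀ x ∈ t, x ∈ Set.range motzkinStep := by
    rintro ⟨x, y⟩ hx
    cases x <;> cases y
    · exact ⟨none, rfl⟩
    · exact ⟨some true, rfl⟩
    · exact ⟨some false, rfl⟩
    · exact absurd (List.mem_append_left _ hx) hY
  obtain ⟨Q, rfl⟩ : t ∈ Set.range (List.map motzkinStep) := by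
    rw [Set.range_list_map]
    exact ht
  exact ⟨Q, rfl⟩

theorem image_expandPath (N : ℕ) :
    (fun Q => expandPath (closeMotzkin Q)) '' {Q | Q.length = N ∧ IsMotzkinWord Q} =
      {X | X.length = N + 5 ∧ IsClosedPath X ∧ HatShape X} := by
  ext X
  constructor
  · rintro ⟨Q, ⟨hlen, hQ⟩, rfl⟩
    rw [isMotzkinWord_iff] at hQ
    change expandPath (closeMotzkin Q) ∈ _
    have hstar : (true, true) ∉ closeMotzkin Q := by
      simp only [closeMotzkin, List.mem_append, List.mem_map, not_or, not_exists, not_and]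
      refine ⟨?_, by simp⟩
      rintro (_ | _ | _) - <;> simp [motzkinStep]
    have hlenY : (closeMotzkin Q).length = N + 1 := by simp [closeMotzkin, hlen]
    generalize closeMotzkin Q = Y at *
    have hYv : ∀ y ∈ Y.takeWhile (fun x => !x.1), y.1 = false := by
      intro y hy
      simpa using List.mem_takeWhile_imp hy
    have hsplit := List.takeWhile_append_dropWhile (p := fun x : Bool × Bool => !x.1) (l := Y)
    have hhead := List.head?_dropWhile_not (fun x : Bool × Bool => !x.1) Y
    generalize Y.takeWhile (fun x => !x.1) = v at *
    generalize Y.dropWhile (fun x => !x.1) = R at *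
    have hv0 : v.countP (·.1) = 0 := by simpa [List.countP_eq_zero] using hYv
    obtain ⟨p, x, q, rfl, hx, hc⟩ : ∃ p x q, R = p ++ x :: q ∧ x.1 = true ∧
        p.countP (·.1) = v.countP (·.2) := by
      apply exists_split_at_fst
      have := hQ.2.1
      rw [← hsplit, List.countP_append, List.countP_append] at this
      omega
    subst hsplit
    have hx' : x = (true, false) := by
      obtain ⟨x1, x2⟩ := x
      cases x2
      · simp at hx
        simp [hx]
      · simp at hx
        subst hx
        simp at hstar
    subst hx'
    have hp : ∀ x ∈ p.head?, x.1 = true := by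
      cases p with
      | nil => simp
      | cons y p => simpa using hhead
    have hX := expandPath_append (q := q) hYv hp hc
    rw [hX]
    refine ⟨?_, (isClosedPath_expand_iff hYv hc).2 hQ, v, p, q, rfl, hYv, hp, hc, ?_, ?_⟩
    · simp at hlenY ⊢
      omega
    · intro h
      simp [h] at hstar
    · intro h
      simp [h] at hstar
  · rintro ⟨hlen, hX, v, p, q, rfl, hv, hp, hc, hsp, hsq⟩
    rw [isClosedPath_expand_iff hv hc] at hX
    obtain ⟨Q, hQ⟩ := exists_closeMotzkin_eq (Y := v ++ (p ++ (true, false) :: q)) (by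
      simp only [List.mem_append, List.mem_cons, not_or]
      refine ⟨fun h => by simpa using hv _ h, hsp, by simp, hsq⟩) hX.1
    refine ⟨Q, ⟨?_, ?_⟩, ?_⟩
    · have := congrArg List.length hQ
      simp [closeMotzkin] at this hlen
      omega
    · rw [isMotzkinWord_iff, ← hQ]
      exact hX
    · simp only [← hQ]
      exact expandPath_append hv hp hc

theorem switchFlags_getD_eq {w : List Bool} (hw : w.count true = w.count false) (i : ℕ) :
    (switchFlags true w).getD i false = ((flagPairs w).getD i (false, false)).1 ∧
      (switchFlags false w).getD i false = ((flagPairs w).getD i (false, false)).2 := by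
  obtain ⟨h1, h2⟩ := map_flagPairs hw
  rw [← h1, ← h2]
  exact ⟨List.getD_map (flagPairs w) (false, false) Prod.fst,
    List.getD_map (flagPairs w) (false, false) Prod.snd⟩

theorem rStat_pos_iff_s12 {n : ℕ} {w : List Bool} (hw : IsDyckWord n w) {i : ℕ} (hi : i + 1 < n) :
    0 < rStat w (i + 1) ↔ ((flagPairs w).getD i (false, false)).1 = true := by
  rw [rStat_succ w i (by rw [hw.2.1]; exact hi), ← switchFlags_getD,
    (switchFlags_getD_eq (hw.2.1.trans hw.2.2.1.symm) i).1]

theorem sStat_pos_iff_s12 {n : ℕ} {w : List Bool} (hw : IsDyckWord n w) {i : ℕ} (hi : i + 1 < n) :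
    0 < sStat w (i + 1) ↔ ((flagPairs w).getD i (false, false)).2 = true := by
  rw [sStat_succ w i (by rw [hw.2.2.1]; exact hi), ← switchFlags_getD,
    (switchFlags_getD_eq (hw.2.1.trans hw.2.2.1.symm) i).2]

theorem rStat_eq_one_iff {n : ℕ} {w : List Bool} (hw : IsDyckWord n w) {i m : ℕ} (hi : i + 1 < n)
    (hflag : ((flagPairs w).getD i (false, false)).1 = true)
    (hm : m = 0 ∨ 0 < m ∧ ((flagPairs w).getD (m - 1) (false, false)).2 = true)
    (hcount : ((flagPairs w).take m).countP (·.2) = ((flagPairs w).take i).countP (·.1)) :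
    rStat w (i + 1) = 1 ↔ ((flagPairs w).getD m (false, false)).2 = true := by
  have hh := (dyckWord_head_last (by omega) hw).1
  have hc := hw.2.1.trans hw.2.2.1.symm
  obtain ⟨h1, h2⟩ := map_flagPairs hc
  rw [rStat_succ w i (by rw [hw.2.1]; exact hi), ← (switchFlags_getD_eq hc m).2]
  refine gapAfter_eq_one_iff true w i m (by rw [hw.2.1]; exact hi) ?_ ?_ ?_
  · rwa [(switchFlags_getD_eq hc i).1]
  · rw [Bool.not_true, (switchFlags_getD_eq hc _).2]
    exact hm.imp_left fun h => ⟨hh, h⟩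
  · rw [countP_fst_eq, countP_snd_eq, List.map_take, List.map_take, h1, h2] at hcount
    simpa [hh] using hcount

theorem sStat_eq_one_iff {n : ℕ} {w : List Bool} (hw : IsDyckWord n w) {i m : ℕ} (hi : i + 1 < n)
    (hflag : ((flagPairs w).getD i (false, false)).2 = true)
    (hm : 0 < m) (hm' : ((flagPairs w).getD (m - 1) (false, false)).1 = true)
    (hcount : ((flagPairs w).take m).countP (·.1) = ((flagPairs w).take i).countP (·.2) + 1) :
    sStat w (i + 1) = 1 ↔ ((flagPairs w).getD m (false, false)).1 = true := by
  have hh := (dyckWord_head_last (by omega) hw).1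
  have hc := hw.2.1.trans hw.2.2.1.symm
  obtain ⟨h1, h2⟩ := map_flagPairs hc
  rw [sStat_succ w i (by rw [hw.2.2.1]; exact hi), ← (switchFlags_getD_eq hc m).1]
  refine gapAfter_eq_one_iff false w i m (by rw [hw.2.2.1]; exact hi) ?_ ?_ ?_
  · rwa [(switchFlags_getD_eq hc i).2]
  · rw [Bool.not_false, (switchFlags_getD_eq hc _).1]
    exact Or.inr ⟨hm, hm'⟩
  · rw [countP_fst_eq, countP_snd_eq, List.map_take, List.map_take, h1, h2] at hcount
    simpa [hh] using hcount

theorem add_le_choose {r s : ℕ} (hr : 0 < r) (hs : 0 < s) : r + s ≤ Nat.choose (r + s) r := by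
  induction r, hr using Nat.le_induction with
  | base => simp
  | succ r hr ih =>
    obtain ⟨t, rfl⟩ : ∃ t, s = t + 1 := ⟨s - 1, by omega⟩
    have h : r + 1 + (t + 1) = (r + (t + 1)) + 1 := by omega
    have : 0 < Nat.choose (r + (t + 1)) (r + 1) := Nat.choose_pos (by omega)
    rw [h, Nat.choose_succ_succ']
    omega

theorem LStat_eq_four_iff {n : ℕ} {w : List Bool} {k₁ k₂ : ℕ} (h : twoStars n w k₁ k₂) :
    LStat n w = 4 ↔ (rStat w k₁ = 1 ∧ sStat w k₁ = 1) ∧ rStat w k₂ = 1 ∧ sStat w k₂ = 1 := by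
  obtain ⟨hk₁, hk₂, hlt, ⟨r1, s1⟩, ⟨r2, s2⟩, hall⟩ := h
  have hprod : LStat n w = Nat.choose (rStat w k₁ + sStat w k₁) (rStat w k₁) *
      Nat.choose (rStat w k₂ + sStat w k₂) (rStat w k₂) := by
    refine Finset.prod_eq_mul k₁ k₂ hlt.ne ?_ (fun h => absurd hk₁ h) (fun h => absurd hk₂ h)
    intro j hj hne
    have hz : rStat w j = 0 ∨ sStat w j = 0 := by
      by_contra hcon
      have := hall j hj (by omega)
      tauto
    rcases hz with hz | hz <;> simp [hz]
  have c1 := add_le_choose r1 s1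
  have c2 := add_le_choose r2 s2
  rw [hprod]
  constructor
  · intro h4
    generalize Nat.choose (rStat w k₁ + sStat w k₁) (rStat w k₁) = a at *
    generalize Nat.choose (rStat w k₂ + sStat w k₂) (rStat w k₂) = b at *
    have ha : a = 2 := by nlinarith
    have hb : b = 2 := by nlinarith
    omega
  · rintro ⟨⟨h1, h2⟩, h3, h4⟩
    simp [h1, h2, h3, h4]

theorem countP_take_succ (X : List (Bool × Bool)) (f : Bool × Bool → Bool)
    (hf : f (false, false) = false) (k : ℕ) :
    (X.take (k + 1)).countP f =
      (X.take k).countP f + if f (X.getD k (false, false)) = true then 1 else 0 := by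
  induction X generalizing k with
  | nil => simp [hf]
  | cons x X ih =>
    cases k with
    | zero => simp [List.countP_cons]
    | succ k =>
      rw [List.take_succ_cons, List.take_succ_cons, List.countP_cons, List.countP_cons, ih,
        List.getD_cons_succ]
      omega

theorem countP_take_eq_of_forall (X : List (Bool × Bool)) (f : Bool × Bool → Bool)
    (hf : f (false, false) = false) {j k : ℕ} (hjk : j ≤ k)
    (h : ∀ i, j ≤ i → i < k → f (X.getD i (false, false)) = false) :
    (X.take k).countP f = (X.take j).countP f := by
  induction k, hjk using Nat.le_induction with
  | base => rfl
  | succ k hk ih =>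
    rw [countP_take_succ X f hf, h k hk (by omega), ih fun i h1 h2 => h i h1 (by omega)]
    simp

theorem exists_getD_of_mem {X : List (Bool × Bool)} {x : Bool × Bool} (hx : x ∈ X) :
    ∃ i < X.length, X.getD i (false, false) = x := by
  obtain ⟨i, hi, rfl⟩ := List.mem_iff_getElem.1 hx
  exact ⟨i, hi, List.getD_eq_getElem _ _ hi⟩

theorem getD_append_cons_length (L T : List (Bool × Bool)) (c d : Bool × Bool) :
    (L ++ c :: T).getD L.length d = c := by
  simp

theorem getD_append_cons_add (L T : List (Bool × Bool)) (c d : Bool × Bool) (k : ℕ) :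
    (L ++ c :: T).getD (L.length + 1 + k) d = T.getD k d := by
  rw [List.getD_append_right _ _ _ _ (by omega),
    show L.length + 1 + k - L.length = k + 1 by omega, List.getD_cons_succ]

theorem take_append_cons_add (L T : List (Bool × Bool)) (c : Bool × Bool) (k : ℕ) :
    (L ++ c :: T).take (L.length + 1 + k) = L ++ c :: T.take k := by
  rw [add_assoc, List.take_length_add_append, add_comm, List.take_succ_cons]

theorem hatShape_of_stats {n : ℕ} {w : List Bool} (hw : IsDyckWord n w) {k₁ k₂ : ℕ}
    (hL : LStat n w = 4) (hstar : twoStars n w k₁ k₂) (hx : xStat w k₁ = 1)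
    (hy : yStat w k₂ = 0) : HatShape (flagPairs w) := by
  obtain ⟨⟨r1, s1⟩, r2, s2⟩ := (LStat_eq_four_iff hstar).1 hL
  obtain ⟨hk₁, hk₂, hlt, hpos₁, hpos₂, hall⟩ := hstar
  rw [Finset.mem_Icc] at hk₁ hk₂
  obtain ⟨i₁, rfl⟩ : ∃ i, k₁ = i + 1 := ⟨k₁ - 1, by omega⟩
  obtain ⟨i₂, rfl⟩ : ∃ i, k₂ = i + 1 := ⟨k₂ - 1, by omega⟩
  have hR {i : ℕ} (hi : i + 1 < n) := rStat_pos_iff_s12 hw hi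
  have hS {i : ℕ} (hi : i + 1 < n) := sStat_pos_iff_s12 hw hi
  have hr1 {m : ℕ} := rStat_eq_one_iff (m := m) hw (i := i₁) (by omega)
  have hr2 {m : ℕ} := rStat_eq_one_iff (m := m) hw (i := i₂) (by omega)
  have hs1 {m : ℕ} := sStat_eq_one_iff (m := m) hw (i := i₁) (by omega)
  have hs2 {m : ℕ} := sStat_eq_one_iff (m := m) hw (i := i₂) (by omega)
  have hlen := length_flagPairs hw
  obtain ⟨hlast, hcount, -⟩ := isClosedPath_flagPairs (by omega) hw
  simp only [r1, r2, s1, s2, true_iff] at hr1 hr2 hs1 hs2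
  have hA1 := (hR (by omega)).1 hpos₁.1
  have hB1 := (hS (by omega)).1 hpos₁.2
  have hA2 := (hR (by omega)).1 hpos₂.1
  have hB2 := (hS (by omega)).1 hpos₂.2
  -- double flags occur only at the two distinguished places
  have hdouble : ∀ i, (flagPairs w).getD i (false, false) = (true, true) → i = i₁ ∨ i = i₂ := by
    intro i hi
    have hin : i < n := by
      by_contra hcon
      rw [List.getD_eq_default _ _ (by omega)] at hi
      simp at hi
    by_cases hi' : i + 1 < n
    · have := hall (i + 1) (by rw [Finset.mem_Icc]; omega) ⟨(hR hi').2 (by rw [hi]),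
        (hS hi').2 (by rw [hi])⟩
      omega
    · exfalso
      rw [List.getLast?_eq_getElem?, hlen, show n - 1 = i by omega] at hlast
      rw [List.getD_eq_getElem?_getD, hlast] at hi
      simp at hi
  have hfst : ∀ i < i₂, i ≠ i₁ → ((flagPairs w).getD i (false, false)).1 = false := by
    intro i hi hne
    by_contra hcon
    rw [Bool.not_eq_false] at hcon
    have hB : ((flagPairs w).getD i (false, false)).2 = true := by
      rw [← hS (by omega)]
      by_contra hcon'
      rw [yStat, Finset.card_eq_zero, Finset.filter_eq_empty_iff] at hy
      exact hy (x := i + 1) (by rw [Finset.mem_Ico]; omega)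
        ⟨(hR (by omega)).2 hcon, by omega⟩
    have := hdouble i (Prod.ext hcon hB)
    omega
  obtain ⟨c, hc⟩ := Finset.card_eq_one.1 hx
  have hc1 : 1 ≤ c ∧ c < i₁ + 1 := by
    have : c ∈ ({c} : Finset ℕ) := by simp
    rw [← hc, Finset.mem_filter, Finset.mem_Ico] at this
    exact this.1
  have hsnd : ∀ i < i₁, ((flagPairs w).getD i (false, false)).2 = true → i + 1 = c := by
    intro i hi hB
    have : i + 1 ∈ ({c} : Finset ℕ) := by
      rw [← hc, Finset.mem_filter, Finset.mem_Ico]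
      refine ⟨by omega, ?_, (hS (by omega)).2 hB⟩
      have := hfst i (by omega) (by omega)
      have h' := (hR (i := i) (by omega)).not
      rw [this] at h'
      simpa using h'
    simpa using this
  have cA1 : ((flagPairs w).take i₁).countP (·.1) = 0 := by
    rw [countP_take_eq_of_forall _ _ rfl (Nat.zero_le i₁)
      fun i _ hi => hfst i (by omega) (by omega)]
    simp
  have hB0 := hr1 (m := 0) hA1 (Or.inl rfl) (by rw [cA1]; simp)
  have cA2 : ((flagPairs w).take i₂).countP (·.1) = 1 := by
    rw [countP_take_eq_of_forall _ _ rfl (show i₁ + 1 ≤ i₂ by omega)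
      fun i _ hi => hfst i (by omega) (by omega), countP_take_succ _ _ rfl, cA1, hA1]
    simp
  have cB1 : ((flagPairs w).take 1).countP (·.2) = 1 := by
    rw [countP_take_succ _ _ rfl, hB0]
    simp
  have hB1' := hr2 (m := 1) hA2 (Or.inr ⟨by omega, hB0⟩) (by rw [cA2, cB1])
  obtain rfl : i₁ = 1 := by
    by_contra hne
    have e1 := hsnd 0 (by omega) hB0
    have e2 := hsnd 1 (by omega) hB1'
    omega
  have hA3 := hs1 (m := i₂ + 1) hB1 (by omega) hA2 (by
    rw [countP_take_succ _ _ rfl, cA2, hA2, cB1]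
    simp)
  have hA0 := hfst 0 (by omega) (by omega)
  clear hr1 hr2 hs1 hall hsnd hR hS cA1 cB1
  obtain ⟨L, x, T, hLlen, hX⟩ : ∃ L x T, L.length = i₂ ∧ flagPairs w = L ++ x :: T := by
    refine ⟨_, (flagPairs w)[i₂], (flagPairs w).drop (i₂ + 1), ?_,
      (by rw [← List.drop_eq_getElem_cons]; exact (List.take_append_drop i₂ _).symm)⟩
    simp
    omega
  generalize flagPairs w = X at *
  subst hX hLlen
  have hx : x = (true, true) := by
    rw [getD_append_cons_length] at hA2 hB2
    exact Prod.ext hA2 hB2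
  subst hx
  obtain ⟨x₀, x₁, v, rfl⟩ : ∃ x₀ x₁ v, L = x₀ :: x₁ :: v := by
    rcases L with _ | ⟨x₀, _ | ⟨x₁, v⟩⟩
    · simp at hlt
    · simp at hlt
    · exact ⟨_, _, _, rfl⟩
  obtain rfl : x₀ = (false, true) := Prod.ext (by simpa using hA0) (by simpa using hB0)
  obtain rfl : x₁ = (true, true) := Prod.ext (by simpa using hA1) (by simpa using hB1)
  have hv : ∀ y ∈ v, y.1 = false := by
    intro y hy
    obtain ⟨i, hi, rfl⟩ := exists_getD_of_mem hy
    have := hfst (i + 2) (by simpa using hi) (by omega)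
    simpa [List.getElem?_append_left hi] using this
  have hT : (true, true) ∉ T := by
    intro h
    obtain ⟨i, hi, h⟩ := exists_getD_of_mem h
    have := hdouble _ ((getD_append_cons_add _ T _ _ i).trans h)
    simp at this
    omega
  have hdown : ∀ y ∈ T, y.1 = true → y = (true, false) := by
    rintro ⟨y1, y2⟩ hy rfl
    cases y2
    · rfl
    · exact absurd hy hT
  have hv0 : v.countP (·.1) = 0 := by simpa [List.countP_eq_zero] using hv
  obtain ⟨p, y, q, rfl, hy1, hp⟩ := exists_split_at_fst (R := T) (k := v.countP (·.2)) (by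
    simp [hv0] at hcount
    omega)
  obtain rfl := hdown y (by simp) hy1
  have hA4 := hs2 (m := ((false, true) :: (true, true) :: v).length + 1 + (p.length + 1)) hB2
    (by omega) (by
      rw [show ((false, true) :: (true, true) :: v).length + 1 + (p.length + 1) - 1
        = ((false, true) :: (true, true) :: v).length + 1 + p.length by omega,
        getD_append_cons_add, getD_append_cons_length]) (by
      rw [take_append_cons_add, List.take_length_add_append, List.take_left]
      simp [hv0, hp])
  rw [getD_append_cons_add, getD_append_cons_add (k := 0) (L := p)] at hA4
  obtain ⟨z, q, rfl⟩ : ∃ z t, q = z :: t := by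
    cases q with
    | nil => simp at hA4
    | cons z t => exact ⟨z, t, rfl⟩
  obtain rfl := hdown z (by simp) (by simpa using hA4)
  refine ⟨v, p, q, rfl, hv, ?_, hp, fun h => hT (by simp [h]), fun h => hT (by simp [h])⟩
  rw [getD_append_cons_add (k := 0)] at hA3
  cases p with
  | nil => simp
  | cons y p => simpa using hA3

theorem stats_of_hatShape {n : ℕ} {w : List Bool} (hw : IsDyckWord n w)
    (h : HatShape (flagPairs w)) :
    LStat n w = 4 ∧ ∃ k₁ k₂, twoStars n w k₁ k₂ ∧ xStat w k₁ = 1 ∧ yStat w k₂ = 0 := by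
  obtain ⟨v, p, q, hX, hv, hp, hc, hsp, hsq⟩ := h
  have hv0 : v.countP (·.1) = 0 := by simpa [List.countP_eq_zero] using hv
  have hlen := length_flagPairs hw
  have hR {i : ℕ} (hi : i + 1 < n) := rStat_pos_iff_s12 hw hi
  have hS {i : ℕ} (hi : i + 1 < n) := sStat_pos_iff_s12 hw hi
  have hR1 {i m : ℕ} (hi : i + 1 < n) := rStat_eq_one_iff (m := m) hw hi
  have hS1 {i m : ℕ} (hi : i + 1 < n) := sStat_eq_one_iff (m := m) hw hi
  obtain ⟨L, hLdef⟩ : ∃ L, L = (false, true) :: (true, true) :: v := ⟨_, rfl⟩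
  obtain ⟨T, hTdef⟩ : ∃ T, T = p ++ (true, false) :: (true, false) :: q := ⟨_, rfl⟩
  have hXL : flagPairs w = L ++ (true, true) :: T := by rw [hX, hLdef, hTdef]; rfl
  have hL : L.length = v.length + 2 := by simp [hLdef]
  have hT : (true, true) ∉ T := by simp [hTdef, hsp, hsq]
  have hTlen : T.length = p.length + q.length + 2 := by simp [hTdef]; omega
  have hn : n = L.length + T.length + 1 := by rw [← hlen, hXL]; simp; omega
  clear hX hlen
  generalize flagPairs w = X at *
  have g0 : X.getD 0 (false, false) = (false, true) := by simp [hXL, hLdef]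
  have g1 : X.getD 1 (false, false) = (true, true) := by simp [hXL, hLdef]
  have g2 : X.getD L.length (false, false) = (true, true) := by
    rw [hXL, getD_append_cons_length]
  have gv : ∀ i, 2 ≤ i → i < L.length → (X.getD i (false, false)).1 = false := by
    intro i h2 hi
    obtain ⟨j, rfl⟩ : ∃ j, i = j + 2 := ⟨i - 2, by omega⟩
    have hj : j < v.length := by omega
    have := hv _ (List.getElem_mem hj)
    simpa [hXL, hLdef, List.getElem?_append_left hj, List.getElem?_eq_getElem hj] using this
  have gT : ∀ k, X.getD (L.length + 1 + k) (false, false) = T.getD k (false, false) := by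
    intro k
    rw [hXL, getD_append_cons_add]
  have gT' : ∀ k, T.getD k (false, false) ≠ (true, true) := by
    intro k hk
    by_cases hkT : k < T.length
    · rw [List.getD_eq_getElem _ _ hkT] at hk
      exact hT (hk ▸ List.getElem_mem hkT)
    · rw [List.getD_eq_default _ _ (by omega)] at hk
      simp at hk
  have t0 : (T.getD 0 (false, false)).1 = true := by
    cases p with
    | nil => simp [hTdef]
    | cons y p => simpa [hTdef] using hp
  have t1 : T.getD p.length (false, false) = (true, false) := by
    rw [hTdef, getD_append_cons_length]
  have t2 : T.getD (p.length + 1) (false, false) = (true, false) := by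
    rw [hTdef, getD_append_cons_add (k := 0)]
    rfl
  have cA : (X.take L.length).countP (·.1) = 1 := by
    rw [hXL, List.take_left]
    simp [hLdef, hv0]
  have cA' : (X.take (L.length + 1)).countP (·.1) = 2 := by
    rw [countP_take_succ _ _ rfl, cA, g2]
    simp
  have cB : (X.take L.length).countP (·.2) = v.countP (·.2) + 2 := by
    rw [hXL, List.take_left]
    simp [hLdef]
  have cT : (X.take (L.length + 1 + (p.length + 1))).countP (·.1) = v.countP (·.2) + 3 := by
    rw [hXL, take_append_cons_add, hTdef, List.take_length_add_append]
    simp [hLdef, hv0, hc]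
  have c1A : (X.take 1).countP (·.1) = 0 := by
    rw [countP_take_succ _ _ rfl, g0]
    simp
  have c1B : (X.take 1).countP (·.2) = 1 := by
    rw [countP_take_succ _ _ rfl, g0]
    simp
  have hstars : twoStars n w (1 + 1) (L.length + 1) := by
    refine ⟨by rw [Finset.mem_Icc]; omega, by rw [Finset.mem_Icc]; omega, by omega,
      ⟨(hR (by omega)).2 (by rw [g1]), (hS (by omega)).2 (by rw [g1])⟩,
      ⟨(hR (by omega)).2 (by rw [g2]), (hS (by omega)).2 (by rw [g2])⟩, ?_⟩
    rintro j hj ⟨hr, hs⟩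
    rw [Finset.mem_Icc] at hj
    obtain ⟨i, rfl⟩ : ∃ i, j = i + 1 := ⟨j - 1, by omega⟩
    rw [hR (by omega)] at hr
    rw [hS (by omega)] at hs
    by_contra hcon
    rcases Nat.lt_or_ge i L.length with hi | hi
    · rcases Nat.lt_or_ge i 2 with hi2 | hi2
      · obtain rfl : i = 0 := by omega
        rw [g0] at hr
        simp at hr
      · rw [gv i hi2 hi] at hr
        simp at hr
    · obtain ⟨k, rfl⟩ : ∃ k, i = L.length + 1 + k := ⟨i - L.length - 1, by omega⟩
      rw [gT] at hr hs
      exact gT' k (Prod.ext hr hs)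
  refine ⟨(LStat_eq_four_iff hstars).2 ⟨⟨?_, ?_⟩, ?_, ?_⟩, 1 + 1, L.length + 1, hstars, ?_, ?_⟩
  · rw [hR1 (m := 0) (by omega) (by rw [g1]) (Or.inl rfl) (by simp [c1A]), g0]
  · rw [hS1 (m := L.length + 1 + 0) (by omega) (by rw [g1]) (by omega)
      (by simp only [Nat.add_zero, Nat.add_sub_cancel, g2]) (by rw [Nat.add_zero, cA', c1B]),
      gT, t0]
  · rw [hR1 (m := 1) (by omega) (by rw [g2])
      (Or.inr ⟨by omega, by simp only [Nat.sub_self, g0]⟩) (by rw [cA, c1B]), g1]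
  · rw [hS1 (m := L.length + 1 + (p.length + 1)) (by omega) (by rw [g2]) (by omega)
      (by rw [show L.length + 1 + (p.length + 1) - 1 = L.length + 1 + p.length by omega, gT, t1])
      (by rw [cT, cB]), gT, t2]
  · have hr : rStat w 1 = 0 := by
      have := (hR (i := 0) (by omega)).not
      rw [g0] at this
      simpa using this
    have hs : 0 < sStat w 1 := (hS (i := 0) (by omega)).2 (by rw [g0])
    simp [xStat, Finset.filter_singleton, hr, hs]
  · rw [yStat, Finset.card_eq_zero, Finset.filter_eq_empty_iff]
    rintro j hj ⟨hr, hs⟩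
    rw [Finset.mem_Ico] at hj
    obtain ⟨i, rfl⟩ : ∃ i, j = i + 1 := ⟨j - 1, by omega⟩
    rw [hR (by omega)] at hr
    rcases Nat.lt_or_ge i 2 with hi2 | hi2
    · interval_cases i
      · rw [g0] at hr
        simp at hr
      · have := (hS (i := 1) (by omega)).2 (by rw [g1])
        omega
    · rw [gv i hi2 (by omega)] at hr
      simp at hr

/-- **Lemma.** For `n ≥ 5`, the number of Dyck paths `D ∈ 𝒟̂ₙ` with
`x₁(D) = 1` and `y₂(D) = 0` is `M_{n-5}`. -/
theorem dyckHat_x1_one_y2_zero_count (n : ℕ) (hn : 5 ≤ n) :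
    {w | IsDyckWord n w ∧ LStat n w = 4 ∧ ∃ k₁ k₂, twoStars n w k₁ k₂ ∧
        xStat w k₁ = 1 ∧ yStat w k₂ = 0}.ncard = motzkin (n - 5) := by
  have himage : flagPairs '' {w | IsDyckWord n w ∧ LStat n w = 4 ∧ ∃ k₁ k₂,
      twoStars n w k₁ k₂ ∧ xStat w k₁ = 1 ∧ yStat w k₂ = 0} =
      {X | X.length = n - 5 + 5 ∧ IsClosedPath X ∧ HatShape X} := by
    ext X
    constructor
    · rintro ⟨w, ⟨hw, hL, k₁, k₂, hstar, hx, hy⟩, rfl⟩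
      exact ⟨by rw [length_flagPairs hw]; omega, isClosedPath_flagPairs (by omega) hw,
        hatShape_of_stats hw hL hstar hx hy⟩
    · rintro ⟨hlen, hX, hshape⟩
      obtain ⟨w, hw, rfl⟩ := exists_dyckWord_flagPairs hX
      rw [hlen, Nat.sub_add_cancel hn] at hw
      exact ⟨w, ⟨hw, stats_of_hatShape hw hshape⟩, rfl⟩
  rw [motzkin, ← Set.InjOn.ncard_image ((flagPairs_injOn (n := n) (by omega)).mono
    fun w hw => hw.1), himage, ← image_expandPath]
  exact Set.ncard_image_of_injective _ (expandPath_injective.comp closeMotzkin_injective)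
end
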